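/- arXiv:0708.3105 — 3 statements merged into one kernel-verified Lean document; each statement's English description precedes it below -/
import Mathlib

section
/- Let I be a nonzero proper ideal in a reduced Noetherian local ring (A,m,k), let C be the integral closure of A in its total ring of fractions, let R = A[It] ⊆ C[t] be the Rees algebra, and let T be the integral closure of R in C[t]. (1) If q is a prime ideal of T containing the set {at : a ∈ I}, then q contains T ∩ tC[t] (the ideal of elements of T with zero constant term). (2) The same holds with T replaced by S = {b ∈ T : b is weakly subintegral over R}: if q is a prime ideal of S containing {at : a ∈ I}, then q contains S ∩ tC[t]. -/
open Polynomial

/-- An element `b` is weakly subintegral over a subset (subring) `R` of `B`: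
there are `q ≥ 0` and `a_i ∈ R` (`1 ≤ i ≤ 2q+1`) with
`b^n + ∑_{i=1}^n (n choose i) a_i b^{n-i} = 0` for `q+1 ≤ n ≤ 2q+1`. -/
def WSubOver {B : Type*} [CommRing B] (R : Set B) (b : B) : Prop :=
  ∃ q : ℕ, ∃ a : ℕ → B, (∀ i, a i ∈ R) ∧
    ∀ n, q + 1 ≤ n → n ≤ 2 * q + 1 →
      b ^ n + ∑ i ∈ Finset.Icc 1 n, (n.choose i : B) * a i * b ^ (n - i) = 0

/-- The Rees algebra `R = A[It]`, as the `A`-subalgebra of `C[t]` generated by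
`{at : a ∈ I}`, where `C` is the integral closure of `A` in its total quotient ring `K`
and `t` is the polynomial variable. -/
noncomputable def reesIn {A : Type*} [CommRing A] (I : Ideal A) (K : Type*) [CommRing K]
    [Algebra A K] : Subalgebra A (Polynomial ↥(integralClosure A K)) :=
  Algebra.adjoin A
    {p : Polynomial ↥(integralClosure A K) | ∃ a ∈ I,
      p = Polynomial.monomial 1 (algebraMap A ↥(integralClosure A K) a)}

theorem Polynomial.monomial_coeff_mul {B : Type*} [CommRing B] (f g : B[X]) (k : ℕ) :
    monomial k ((f * g).coeff k) =
      ∑ ij ∈ Finset.HasAntidiagonal.antidiagonal k,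
        monomial ij.1 (f.coeff ij.1) * monomial ij.2 (g.coeff ij.2) := by
  rw [coeff_mul, map_sum]
  refine Finset.sum_congr rfl fun ij hij ↦ ?_
  rw [monomial_mul_monomial, Finset.HasAntidiagonal.mem_antidiagonal.mp hij]

section HomogeneousComponents

variable {R B : Type*} [CommRing R] [CommRing B] [Algebra R B[X]]

/-- If the image of `R` in `B[X]` contains the homogeneous components of its elements, then so does
the integral closure of `R` in `B[X]`. -/
theorem Polynomial.isIntegral_monomial_coeff
    (hR : ∀ (r : R) (k : ℕ),
      monomial k ((algebraMap R B[X] r).coeff k) ∈ (algebraMap R B[X]).range)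
    {f : B[X]} (hf : IsIntegral R f) (k : ℕ) : IsIntegral R (monomial k (f.coeff k)) := by
  let φ : B[X] →+* B[X][X] := eval₂RingHom (C.comp C) (monomial 1 X)
  have hφ (g : B[X]) (n : ℕ) : (φ g).coeff n = monomial n (g.coeff n) := by
    induction g using Polynomial.induction_on' with
    | add p q hp hq => simp [hp, hq]
    | monomial m b =>
      simp only [φ, coe_eval₂RingHom, eval₂_monomial, monomial_pow, RingHom.comp_apply,
        coeff_C_mul, coeff_monomial, one_mul]
      split_ifs with h
      · rw [h, C_mul_X_pow_eq_monomial]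
      · simp
  let : Algebra R[X] B[X][X] := Polynomial.algebra R B[X]
  have hint : IsIntegral R[X] (φ f) := by
    obtain ⟨p, hp, hpf⟩ := hf
    have hmem : p.map (φ.comp (algebraMap R B[X])) ∈ lifts (algebraMap R[X] B[X][X]) := by
      rw [lifts_iff_coeff_lifts]
      intro n
      rw [coeff_map]
      refine (mem_lifts _).mp ((lifts_iff_coeff_lifts (f := algebraMap R B[X]) _).mpr fun m ↦ ?_)
      rw [RingHom.comp_apply, hφ]
      exact hR _ m
    obtain ⟨P, hP, -, hPm⟩ := lifts_and_natDegree_eq_and_monic hmem (hp.map _)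
    refine ⟨P, hPm, ?_⟩
    rw [← eval_map, hP, eval_map, ← hom_eval₂, hpf, map_zero]
  rw [← hφ]
  exact isIntegral_iff_isIntegral_coeff.mp hint k

/-- A homogeneous integral element satisfies a homogeneous equation of integral dependence. -/
theorem Polynomial.exists_homogeneous_integral_equation {i : ℕ} {c : B}
    (hc : IsIntegral R (monomial i c)) :
    ∃ p : R[X], monomial i c ^ p.natDegree = -∑ j ∈ Finset.range p.natDegree,
      monomial (i * (p.natDegree - j))
        ((algebraMap R B[X] (p.coeff j)).coeff (i * (p.natDegree - j))) * monomial i c ^ j := by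
  obtain ⟨p, hp, hpc⟩ := hc
  refine ⟨p, eq_neg_of_add_eq_zero_left ?_⟩
  have hmon (j : ℕ) (hj : j ≤ p.natDegree) (g : B[X]) :
      monomial (i * p.natDegree) ((g * monomial i c ^ j).coeff (i * p.natDegree)) =
        monomial (i * (p.natDegree - j)) (g.coeff (i * (p.natDegree - j))) *
          monomial i c ^ j := by
    have hd : i * p.natDegree = i * (p.natDegree - j) + i * j := by
      rw [← mul_add, Nat.sub_add_cancel hj]
    rw [monomial_pow, hd, coeff_mul_monomial, monomial_mul_monomial]
  have h0 := congrArg (fun g ↦ monomial (i * p.natDegree) (coeff g (i * p.natDegree))) hpc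
  simp only [eval₂_eq_sum_range, Finset.sum_range_succ, hp.coeff_natDegree, map_one,
    coeff_add, finsetSum_coeff, map_add, map_sum, coeff_zero, map_zero] at h0
  rw [hmon _ le_rfl, Finset.sum_congr rfl fun j hj ↦
    hmon j (Finset.mem_range.mp hj).le _] at h0
  rw [add_comm]
  simpa using h0

/-- A prime of the integral closure of `R` in `B[X]` that contains the homogeneous components of
positive degree of elements of `R` contains every element with zero constant term. -/
theorem Polynomial.mem_of_coeff_zero_eq_zero
    (hR : ∀ (r : R) (k : ℕ),
      monomial k ((algebraMap R B[X] r).coeff k) ∈ (algebraMap R B[X]).range)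
    {q : Ideal (integralClosure R B[X])} (hq : q.IsPrime)
    (hpos : ∀ r s : R, ∀ k ≠ 0, algebraMap R B[X] s = monomial k ((algebraMap R B[X] r).coeff k) →
      algebraMap R (integralClosure R B[X]) s ∈ q)
    {x : integralClosure R B[X]} (hx : (x : B[X]).coeff 0 = 0) : x ∈ q := by
  let y (i : ℕ) : integralClosure R B[X] :=
    ⟨monomial i ((x : B[X]).coeff i), isIntegral_monomial_coeff hR x.2 i⟩
  have hsum : x = ∑ i ∈ (x : B[X]).support, y i := by
    apply Subtype.ext
    rw [AddSubmonoidClass.coe_finsetSum]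
    exact as_sum_support _
  rw [hsum]
  refine sum_mem fun i hi ↦ ?_
  have hi0 : i ≠ 0 := by
    rintro rfl
    exact mem_support_iff.mp hi hx
  obtain ⟨p, hp⟩ := exists_homogeneous_integral_equation (y i).2
  choose s hs using id hR
  have hpow : y i ^ p.natDegree = -∑ j ∈ Finset.range p.natDegree,
      algebraMap R (integralClosure R B[X]) (s (p.coeff j) (i * (p.natDegree - j))) * y i ^ j := by
    apply Subtype.ext
    rw [NegMemClass.coe_neg, AddSubmonoidClass.coe_finsetSum]
    refine hp.trans (congrArg _ (Finset.sum_congr rfl fun j _ ↦ ?_))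
    rw [← hs]
    rfl
  refine hq.mem_of_pow_mem p.natDegree ?_
  rw [hpow]
  refine neg_mem (sum_mem fun j hj ↦ q.mul_mem_right _ (hpos _ _ _ ?_ (hs _ _)))
  have := Finset.mem_range.mp hj
  exact mul_ne_zero hi0 (by omega)

end HomogeneousComponents

/-- Lying over for an intermediate ring of an integral closure. -/
theorem exists_prime_integralClosure_comap_inclusion_eq {R D : Type*} [CommRing R] [CommRing D]
    [Algebra R D] {S : Subalgebra R D} (hS : S ≤ integralClosure R D) (q : Ideal S)
    (hq : q.IsPrime) :
    ∃ Q : Ideal (integralClosure R D), Q.IsPrime ∧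
      ∀ x, Subalgebra.inclusion hS x ∈ Q ↔ x ∈ q := by
  let : Algebra S (integralClosure R D) := (Subalgebra.inclusion hS).toRingHom.toAlgebra
  have : IsScalarTower R S (integralClosure R D) := IsScalarTower.of_algebraMap_eq fun _ ↦ rfl
  have : Algebra.IsIntegral S (integralClosure R D) := Algebra.IsIntegral.tower_top R
  have hker : Ideal.comap (algebraMap S (integralClosure R D)) ⊥ ≤ q := by
    intro z hz
    have hz0 : z = 0 := Subalgebra.inclusion_injective hS (hz.trans (map_zero _).symm)
    exact hz0 ▸ q.zero_mem
  obtain ⟨Q, -, hQ, rfl⟩ := Ideal.exists_ideal_over_prime_of_isIntegral q ⊥ hker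
  exact ⟨Q, hQ, fun x ↦ Iff.rfl⟩

section Adjoin

variable {A B : Type*} [CommRing A] [CommRing B] [Algebra A B] {I : Ideal A}
  {R : Subalgebra A B[X]}

theorem monomial_coeff_mem_adjoin
    (hR : R = Algebra.adjoin A {p : B[X] | ∃ a ∈ I, p = monomial 1 (algebraMap A B a)})
    {r : B[X]} (hr : r ∈ R) (k : ℕ) : monomial k (r.coeff k) ∈ R := by
  subst hR
  induction hr using Algebra.adjoin_induction generalizing k with
  | mem x hx =>
    obtain ⟨a, ha, rfl⟩ := hx
    rw [coeff_monomial]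
    split_ifs with h
    · subst h
      exact Algebra.subset_adjoin ⟨a, ha, rfl⟩
    · simp
  | algebraMap a =>
    rw [Polynomial.algebraMap_apply, coeff_C]
    split_ifs with h
    · subst h
      exact Subalgebra.algebraMap_mem _ a
    · simp
  | add x y _ _ hx hy =>
    rw [coeff_add, map_add]
    exact add_mem (hx k) (hy k)
  | mul x y _ _ hx hy =>
    rw [monomial_coeff_mul]
    exact sum_mem fun ij _ ↦ mul_mem (hx _) (hy _)

/-- An ideal of the Rees algebra containing `It` contains all homogeneous components of positive
degree. -/
theorem mem_of_coe_eq_monomial_coeff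
    (hR : R = Algebra.adjoin A {p : B[X] | ∃ a ∈ I, p = monomial 1 (algebraMap A B a)})
    (J : Ideal R)
    (hJ : ∀ x : R, (∃ a ∈ I, (x : B[X]) = monomial 1 (algebraMap A B a)) → x ∈ J)
    {r : B[X]} (hr : r ∈ R) {k : ℕ} (hk : k ≠ 0) (z : R)
    (hz : (z : B[X]) = monomial k (r.coeff k)) : z ∈ J := by
  have hzero {z : R} (hz : (z : B[X]) = 0) : z ∈ J := by
    have : z = 0 := Subtype.ext hz
    exact this ▸ J.zero_mem
  have hcomp {f : B[X]} (hf : f ∈ R) (n : ℕ) : monomial n (f.coeff n) ∈ R :=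
    monomial_coeff_mem_adjoin hR hf n
  subst hR
  induction hr using Algebra.adjoin_induction generalizing k z with
  | mem x hx =>
    obtain ⟨a, ha, rfl⟩ := hx
    by_cases h : 1 = k
    · subst h
      exact hJ _ ⟨a, ha, by rw [hz, coeff_monomial_same]⟩
    · exact hzero (by rw [hz, coeff_monomial_of_ne _ (Ne.symm h), map_zero])
  | algebraMap a =>
    exact hzero (by rw [hz, Polynomial.algebraMap_apply, coeff_C, if_neg hk, map_zero])
  | add x y hxm hym hx hy =>
    rw [coeff_add, map_add] at hz
    have hsum : z = ⟨_, hcomp hxm k⟩ + ⟨_, hcomp hym k⟩ := Subtype.ext hz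
    rw [hsum]
    exact J.add_mem (hx hk _ rfl) (hy hk _ rfl)
  | mul x y hxm hym hx hy =>
    have hsum : z = ∑ ij ∈ Finset.HasAntidiagonal.antidiagonal k,
        ⟨_, hcomp hxm ij.1⟩ * ⟨_, hcomp hym ij.2⟩ := by
      apply Subtype.ext
      rw [AddSubmonoidClass.coe_finsetSum, hz]
      exact monomial_coeff_mul x y k
    rw [hsum]
    refine sum_mem fun ij hij ↦ ?_
    by_cases h : ij.1 = 0
    · have h2 : ij.2 ≠ 0 := by
        have := Finset.HasAntidiagonal.mem_antidiagonal.mp hij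
        omega
      exact J.mul_mem_left _ (hy h2 _ rfl)
    · exact J.mul_mem_right _ (hx h _ rfl)

theorem mem_of_coeff_zero_eq_zero_of_monomial_one_mem
    (hR : R = Algebra.adjoin A {p : B[X] | ∃ a ∈ I, p = monomial 1 (algebraMap A B a)})
    {q : Ideal (integralClosure R B[X])} (hq : q.IsPrime)
    (hIq : ∀ x : integralClosure R B[X],
      (∃ a ∈ I, (x : B[X]) = monomial 1 (algebraMap A B a)) → x ∈ q)
    {x : integralClosure R B[X]} (hx : (x : B[X]).coeff 0 = 0) : x ∈ q :=
  Polynomial.mem_of_coeff_zero_eq_zero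
    (fun r k ↦ ⟨⟨_, monomial_coeff_mem_adjoin hR r.2 k⟩, rfl⟩) hq
    (fun r s _ hk hs ↦ mem_of_coe_eq_monomial_coeff hR
      (q.comap (algebraMap R (integralClosure R B[X]))) (fun _ hz ↦ hIq _ hz) r.2 hk s hs) hx

theorem mem_of_coeff_zero_eq_zero_of_le_integralClosure
    (hR : R = Algebra.adjoin A {p : B[X] | ∃ a ∈ I, p = monomial 1 (algebraMap A B a)})
    {S : Subalgebra R B[X]} (hS : S ≤ integralClosure R B[X])
    {q : Ideal S} (hq : q.IsPrime)
    (hIq : ∀ x : S, (∃ a ∈ I, (x : B[X]) = monomial 1 (algebraMap A B a)) → x ∈ q)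
    {x : S} (hx : (x : B[X]).coeff 0 = 0) : x ∈ q := by
  obtain ⟨Q, hQ, hQq⟩ := exists_prime_integralClosure_comap_inclusion_eq hS q hq
  refine (hQq x).mp (mem_of_coeff_zero_eq_zero_of_monomial_one_mem hR hQ ?_ hx)
  rintro z ⟨a, ha, hz⟩
  have hzR : (z : B[X]) ∈ R := hR.ge (Algebra.subset_adjoin ⟨a, ha, hz⟩)
  exact (hQq ⟨z, S.algebraMap_mem ⟨_, hzR⟩⟩).mpr (hIq _ ⟨a, ha, hz⟩)

end Adjoin

/-- Lemma 3.1: let `I` be a nonzero proper ideal of a reduced Noetherian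
local ring `(A,m,k)`, `C` the integral closure of `A` in its total quotient ring `K`,
`R = A[It] ⊆ C[t]` the Rees algebra, `T` the integral closure of `R` in `C[t]`, and `S` the
weak normalization of `R` in `T` (characterized by `hS`).  (1) Every prime ideal of `T`
containing `{at : a ∈ I}` contains `T ∩ tC[t]` (the elements of `T` with zero constant
term); (2) likewise for `S`. -/
theorem prime_containing_It_contains_positive_part {A K : Type*} [CommRing A]
    [IsNoetherianRing A] [IsLocalRing A] [IsReduced A]
    [CommRing K] [Algebra A K] [IsFractionRing A K]
    (I : Ideal A) (hI0 : I ≠ ⊥) (hI1 : I ≠ ⊤)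
    (S : Subalgebra ↥(reesIn I K) (Polynomial ↥(integralClosure A K)))
    (hS : ∀ f : Polynomial ↥(integralClosure A K),
      f ∈ S ↔ f ∈ integralClosure ↥(reesIn I K) (Polynomial ↥(integralClosure A K)) ∧
        WSubOver (reesIn I K : Set (Polynomial ↥(integralClosure A K))) f) :
    (∀ q : Ideal ↥(integralClosure ↥(reesIn I K) (Polynomial ↥(integralClosure A K))),
      q.IsPrime →
      (∀ x : ↥(integralClosure ↥(reesIn I K) (Polynomial ↥(integralClosure A K))),
        (∃ a ∈ I, (x : Polynomial ↥(integralClosure A K))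
            = Polynomial.monomial 1 (algebraMap A ↥(integralClosure A K) a)) → x ∈ q) →
      ∀ x : ↥(integralClosure ↥(reesIn I K) (Polynomial ↥(integralClosure A K))),
        (x : Polynomial ↥(integralClosure A K)).coeff 0 = 0 → x ∈ q) ∧
    (∀ q : Ideal ↥S, q.IsPrime →
      (∀ x : ↥S, (∃ a ∈ I, (x : Polynomial ↥(integralClosure A K))
            = Polynomial.monomial 1 (algebraMap A ↥(integralClosure A K) a)) → x ∈ q) →
      ∀ x : ↥S, (x : Polynomial ↥(integralClosure A K)).coeff 0 = 0 → x ∈ q) := by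
  exact ⟨fun q hq hIq x hx ↦ mem_of_coeff_zero_eq_zero_of_monomial_one_mem rfl hq hIq hx,
    fun q hq hIq x hx ↦ mem_of_coeff_zero_eq_zero_of_le_integralClosure rfl
      (fun f hf ↦ ((hS f).mp hf).1) hq hIq hx⟩
end

section
/- Let k be an algebraically closed field of characteristic 0 and let (A,m,k) be the local ring of an algebraic variety over k. Let I be an m-primary ideal of A, h ∈ A, R = A[It], and S = A[It, ht] ⊆ A[t] (the subring generated by R and ht, graded by t-degree). If the induced map Proj(S) → Proj(R), q ↦ q ∩ R, is a homeomorphism (with respect to the Zariski topologies), then h belongs to the weak subintegral closure *I of I. -/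
set_option synthInstance.maxHeartbeats 400000
set_option maxHeartbeats 1000000

open Polynomial

/-- An element `b` is weakly subintegral over an ideal `I`; the set of such elements is
the weak subintegral closure `*I`. -/
def WSubIdeal {A : Type*} [CommRing A] (I : Ideal A) (b : A) : Prop :=
  ∃ q : ℕ, ∃ a : ℕ → A, (∀ i, a i ∈ I ^ i) ∧
    ∀ n, q + 1 ≤ n → n ≤ 2 * q + 1 →
      b ^ n + ∑ i ∈ Finset.Icc 1 n, (n.choose i : A) * a i * b ^ (n - i) = 0

/-- An ideal `q` of a graded subring `W ⊆ A[t]` is homogeneous (grading by `t`-degree). -/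
def IsHomogIdealIn {A : Type*} [CommRing A] (W : Subalgebra A (Polynomial A))
    (q : Ideal ↥W) : Prop :=
  ∀ x ∈ q, ∀ (n : ℕ) (hc : Polynomial.monomial n ((x : Polynomial A).coeff n) ∈ W),
    (⟨_, hc⟩ : ↥W) ∈ q

/-- A homogeneous element of a graded subring `W ⊆ A[t]`: a monomial in `t`. -/
def IsHomogElem {A : Type*} [CommRing A] (W : Subalgebra A (Polynomial A)) (f : ↥W) : Prop :=
  ∃ n : ℕ, ∀ i ≠ n, (f : Polynomial A).coeff i = 0

/-- `Proj W` for a graded subring `W ⊆ A[t]`: homogeneous prime ideals of `W` not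
containing the irrelevant ideal `W_+` (the elements with zero constant term). -/
def ProjOf {A : Type*} [CommRing A] (W : Subalgebra A (Polynomial A)) : Type _ :=
  {q : Ideal ↥W // q.IsPrime ∧ IsHomogIdealIn W q ∧
    ∃ x : ↥W, (x : Polynomial A).coeff 0 = 0 ∧ x ∉ q}

/-- The Zariski topology on `Proj W`, generated by the basic open sets
`D(f) = {q | f ∉ q}` for homogeneous `f ∈ W`. -/
def projTopology {A : Type*} [CommRing A] (W : Subalgebra A (Polynomial A)) :
    TopologicalSpace (ProjOf W) :=
  TopologicalSpace.generateFrom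
    {U | ∃ f : ↥W, IsHomogElem W f ∧ U = {q : ProjOf W | f ∉ q.val}}

theorem Submodule.FG.exists_notMem_smul_mem {T M : Type*} [CommRing T] [AddCommGroup M]
    [Module T M] (p : Ideal T) [p.IsPrime] {N U : Submodule T M} (hN : N.FG)
    (h : ∀ y ∈ N, ∃ s ∉ p, s • y ∈ U) : ∃ s ∉ p, ∀ y ∈ N, s • y ∈ U := by
  induction N, hN using Submodule.fg_induction with
  | singleton x =>
    obtain ⟨s, hs, hx⟩ := h x (Submodule.mem_span_singleton_self x)
    refine ⟨s, hs, fun y hy => ?_⟩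
    obtain ⟨a, rfl⟩ := Submodule.mem_span_singleton.mp hy
    rw [smul_comm]
    exact U.smul_mem a hx
  | sup N₁ N₂ _ _ ih₁ ih₂ =>
    obtain ⟨s₁, hs₁, h₁⟩ := ih₁ fun y hy => h y (Submodule.mem_sup_left hy)
    obtain ⟨s₂, hs₂, h₂⟩ := ih₂ fun y hy => h y (Submodule.mem_sup_right hy)
    refine ⟨s₁ * s₂, fun hm => (Ideal.IsPrime.mem_or_mem ‹_› hm).elim hs₁ hs₂, fun y hy => ?_⟩
    obtain ⟨y₁, hy₁, y₂, hy₂, rfl⟩ := Submodule.mem_sup.mp hy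
    rw [smul_add]
    refine U.add_mem ?_ ?_
    · rw [mul_comm, mul_smul]
      exact U.smul_mem _ (h₁ _ hy₁)
    · rw [mul_smul]
      exact U.smul_mem _ (h₂ _ hy₂)

/-- In a minimal prime over `c`, every element is nilpotent modulo `c` up to multiplication
by an element outside of the prime. -/
theorem Ideal.exists_notMem_mul_pow_mem_of_mem_minimalPrimes {T : Type*} [CommRing T]
    {c p : Ideal T} (hp : p ∈ c.minimalPrimes) {x : T} (hx : x ∈ p) :
    ∃ s ∉ p, ∃ n : ℕ, s * x ^ n ∈ c := by
  have := hp.1.1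
  by_contra! hcon
  obtain ⟨Q, hQ, hcQ, hd⟩ := Ideal.exists_le_prime_disjoint c (p.primeCompl ⊔ Submonoid.powers x)
    (by
      rw [Set.disjoint_left]
      intro a ha hm
      obtain ⟨s, hs, _, ⟨n, rfl⟩, rfl⟩ := Submonoid.mem_sup.mp hm
      exact hcon s hs n ha)
  rw [Set.disjoint_left] at hd
  have hQp : Q ≤ p := fun a ha => by
    by_contra hap
    exact hd ha (Submonoid.mem_sup_left hap)
  exact hd (hp.2 ⟨hQ, hcQ⟩ hQp hx) (Submonoid.mem_sup_right (Submonoid.mem_powers x))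

/-- A ring map has linear residue extensions: modulo the radical of the ideal generated
by any prime `p` of the base, every element is a fraction with denominator outside of `p`. -/
def HasLinearFibers (T S : Type*) [CommRing T] [CommRing S] [Algebra T S] : Prop :=
  ∀ p : Ideal T, p.IsPrime → ∀ y : S, ∃ s ∉ p, ∃ r : T,
    s • y - algebraMap T S r ∈ (p.map (algebraMap T S)).radical

/-- A small step `T ⊂ T + Tβ` inside of a finite extension with linear fibers. -/
theorem HasLinearFibers.exists_elementary_step {T S : Type*} [CommRing T] [CommRing S]
    [Algebra T S] [IsNoetherianRing T] [Module.Finite T S] (H : HasLinearFibers T S)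
    (hne : (⊥ : Subalgebra T S) ≠ ⊤) :
    ∃ (p : Ideal T) (N : Ideal S) (β : S), p.IsPrime ∧
      (∀ y : S, ∃ s ∉ p, ∃ r : T, s • y - algebraMap T S r ∈ N) ∧
      (∀ t, algebraMap T S t ∈ N ↔ t ∈ p) ∧
      (∃ s ∉ p, ∃ M : ℕ, ∀ y ∈ N ^ M, s • y ∈ (⊥ : Subalgebra T S)) ∧
      β ∈ N ∧ β ^ 2 ∈ (⊥ : Subalgebra T S) ∧
      (∀ t, t • β ∈ (⊥ : Subalgebra T S) ↔ t ∈ p) := by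
  have : IsNoetherianRing S := IsNoetherianRing.of_finite T S
  set U : Submodule T S := Subalgebra.toSubmodule ⊥ with hU
  -- the conductor, as an ideal of `S`
  let C : Ideal S :=
    { carrier := {y | ∀ z : S, y * z ∈ U}
      add_mem' := fun ha hb z => by rw [add_mul]; exact U.add_mem (ha z) (hb z)
      zero_mem' := fun z => by rw [zero_mul]; exact U.zero_mem
      smul_mem' := fun c y hy z => by
        have := hy (c * z)
        rwa [smul_eq_mul, mul_comm c y, mul_assoc] }
  have hCU : ∀ y ∈ C, y ∈ U := fun y hy => by simpa using hy 1
  set c : Ideal T := C.comap (algebraMap T S) with hc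
  have hc1 : c ≠ ⊤ := by
    intro htop
    apply hne
    rw [eq_top_iff]
    rintro y -
    have h1 : (1 : T) ∈ c := htop ▸ Submodule.mem_top
    have := (show ∀ z : S, algebraMap T S 1 * z ∈ U from h1) y
    rwa [map_one, one_mul] at this
  obtain ⟨m, hm, hcm⟩ := Ideal.exists_le_maximal c hc1
  have := hm.isPrime
  obtain ⟨p, hp, -⟩ := Ideal.exists_minimalPrimes_le hcm
  have hpp : p.IsPrime := hp.1.1
  have hmul : ∀ {s₁ s₂ : T}, s₁ ∉ p → s₂ ∉ p → s₁ * s₂ ∉ p := fun h₁ h₂ hm =>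
    (hpp.mem_or_mem hm).elim h₁ h₂
  have hsmulC : ∀ (s : T) {y : S}, y ∈ C → s • y ∈ C := fun s y hy => by
    rw [Algebra.smul_def]; exact C.mul_mem_left _ hy
  let Cp : Ideal S :=
    { carrier := {y | ∃ s ∉ p, s • y ∈ C}
      add_mem' := by
        rintro a b ⟨s₁, hs₁, h₁⟩ ⟨s₂, hs₂, h₂⟩
        refine ⟨s₁ * s₂, hmul hs₁ hs₂, ?_⟩
        rw [smul_add]
        refine C.add_mem ?_ ?_
        · rw [mul_comm, mul_smul]; exact hsmulC _ h₁
        · rw [mul_smul]; exact hsmulC _ h₂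
      zero_mem' := ⟨1, p.one_notMem, by simp⟩
      smul_mem' := by
        rintro a y ⟨s, hs, h⟩
        refine ⟨s, hs, ?_⟩
        rw [smul_eq_mul, ← mul_smul_comm]
        exact C.mul_mem_left _ h }
  let N : Ideal S := Cp.radical
  have hpN : ∀ t ∈ p, algebraMap T S t ∈ N := fun t ht => by
    obtain ⟨s, hs, n, hn⟩ := Ideal.exists_notMem_mul_pow_mem_of_mem_minimalPrimes hp ht
    refine ⟨n, s, hs, ?_⟩
    rw [Algebra.smul_def, ← map_pow, ← map_mul]
    exact hn
  have hNp : ∀ t, algebraMap T S t ∈ N → t ∈ p := by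
    rintro t ⟨n, s, hs, h⟩
    rw [Algebra.smul_def, ← map_pow, ← map_mul] at h
    have h' : s * t ^ n ∈ p := hp.1.2 h
    exact hpp.mem_of_pow_mem _ ((hpp.mem_or_mem h').resolve_left hs)
  have hfrac : ∀ y : S, ∃ s ∉ p, ∃ r : T, s • y - algebraMap T S r ∈ N := fun y => by
    obtain ⟨s, hs, r, h⟩ := H p hpp y
    refine ⟨s, hs, r, ?_⟩
    have : (p.map (algebraMap T S)).radical ≤ N := by
      rw [Ideal.IsRadical.radical_le_iff (Ideal.radical_isRadical Cp)]
      exact Ideal.map_le_iff_le_comap.mpr hpN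
    exact this h
  have hfg : ∀ J : Ideal S, (J.restrictScalars T).FG := fun J => IsNoetherian.noetherian _
  have hex : ∃ M : ℕ, ∃ s ∉ p, ∀ y ∈ N ^ M, s • y ∈ U := by
    obtain ⟨M, hM⟩ := Ideal.exists_radical_pow_le_of_fg Cp (IsNoetherian.noetherian _)
    obtain ⟨s, hs, h⟩ := Submodule.FG.exists_notMem_smul_mem p (U := U)
      (hfg Cp) fun y hy => by
        obtain ⟨s, hs, h⟩ := hy
        exact ⟨s, hs, hCU _ h⟩
    exact ⟨M, s, hs, fun y hy => h y (hM hy)⟩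
  have h0 : ¬ ∃ s ∉ p, ∀ y ∈ N ^ 0, s • y ∈ U := by
    rintro ⟨s, hs, h⟩
    refine hs (hp.1.2 fun z => ?_)
    rw [← Algebra.smul_def]
    exact h z (by simp)
  have h1 : ¬ ∃ s ∉ p, ∀ y ∈ N ^ 1, s • y ∈ U := by
    rintro ⟨s, hs, h⟩
    apply h0
    obtain ⟨s', hs', h'⟩ := Submodule.FG.exists_notMem_smul_mem p (N := ⊤) (U := U)
      (IsNoetherian.noetherian _) fun y _ => by
        obtain ⟨s', hs', r, hr⟩ := hfrac y
        refine ⟨s * s', hmul hs hs', ?_⟩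
        have := h _ (by simpa using hr)
        rw [smul_sub, sub_eq_add_neg, ← mul_smul] at this
        refine (U.add_mem_iff_left (U.neg_mem (U.smul_mem s ?_))).mp this
        exact (⊥ : Subalgebra T S).algebraMap_mem r
    exact ⟨s', hs', fun y _ => h' y trivial⟩
  classical
  obtain ⟨j, hj1, hj, hj'⟩ : ∃ j, 1 ≤ j ∧ (¬ ∃ s ∉ p, ∀ y ∈ N ^ j, s • y ∈ U) ∧
      ∃ s ∉ p, ∀ y ∈ N ^ (j + 1), s • y ∈ U := by
    have hspec := Nat.find_spec hex
    have hmin := fun i => Nat.find_min hex (m := i)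
    rcases hJ : Nat.find hex with _ | _ | j
    · rw [hJ] at hspec
      exact absurd hspec h0
    · rw [hJ] at hspec
      exact absurd hspec h1
    · rw [hJ] at hspec
      exact ⟨j + 1, by omega, hmin _ (by omega), hspec⟩
  obtain ⟨s, hs, hsU⟩ := hj'
  obtain ⟨y, hy, hyU⟩ : ∃ y ∈ N ^ j, ∀ s ∉ p, s • y ∉ U := by
    by_contra! hcon
    exact hj (Submodule.FG.exists_notMem_smul_mem p (hfg (N ^ j)) hcon)
  have hsy : (s • y) ^ 2 ∈ U := by
    rw [_root_.smul_pow, pow_succ s, mul_smul]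
    refine U.smul_mem _ (hsU _ ?_)
    have := Ideal.pow_mem_pow hy 2
    rw [← pow_mul] at this
    exact Ideal.pow_le_pow_right (by omega) this
  refine ⟨p, N, s • y, hpp, hfrac, fun t => ⟨hNp t, hpN t⟩, ?_, ?_, hsy,
    fun t => ⟨fun ht => ?_, fun ht => ?_⟩⟩
  · obtain ⟨M, s, hs, h⟩ := hex
    exact ⟨s, hs, M, h⟩
  · rw [Algebra.smul_def]
    exact N.mul_mem_left _ (Ideal.pow_le_self (by omega) hy)
  · by_contra htp
    rw [← mul_smul] at ht
    exact hyU _ (hmul htp hs) ht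
  · rw [smul_comm]
    refine hsU _ ?_
    rw [Algebra.smul_def, pow_succ']
    exact Ideal.mul_mem_mul (hpN t ht) hy

/-- Over an integral extension, a polynomial with constant term `1` divides a polynomial with
constant term `1` defined over the base. -/
theorem Polynomial.exists_map_eq_mul_of_coeff_zero_eq_one {T S : Type*} [CommRing T] [CommRing S]
    [Algebra T S] [Algebra.IsIntegral T S] (P : S[X]) (hP : P.coeff 0 = 1) :
    ∃ (U : T[X]) (W : S[X]), U.coeff 0 = 1 ∧ U.map (algebraMap T S) = P * W := by
  rcases subsingleton_or_nontrivial S with hS | hS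
  · exact ⟨1, 0, coeff_one_zero, Subsingleton.elim _ _⟩
  set q := P.natDegree with hq
  set D : S[X] := reflect q P with hD
  have hDdeg : D.natDegree ≤ q := by
    rw [natDegree_le_iff_coeff_eq_zero]
    intro n hn
    rw [hD, coeff_reflect, revAt_eq_self_of_lt hn]
    exact coeff_eq_zero_of_natDegree_lt hn
  have hDmonic : D.Monic := by
    apply monic_of_natDegree_le_of_coeff_eq_one q hDdeg
    rw [hD, coeff_reflect, revAt_le le_rfl, Nat.sub_self, hP]
  have hrootInt : IsIntegral T (AdjoinRoot.root D) := by
    have : Module.Finite S (AdjoinRoot D) := hDmonic.finite_adjoinRoot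
    exact isIntegral_trans (A := S) _ (Algebra.IsIntegral.isIntegral _)
  obtain ⟨u, hu, hroot⟩ := hrootInt
  have hdvd : D ∣ u.map (algebraMap T S) := by
    rw [← AdjoinRoot.mk_eq_zero, ← AdjoinRoot.aeval_eq, aeval_map_algebraMap]
    exact hroot
  obtain ⟨w, hw⟩ := hdvd
  have hDq : D.natDegree = q :=
    le_antisymm hDdeg (le_natDegree_of_ne_zero (by simp [hD, coeff_reflect, revAt_le, hP]))
  have hw0 : w ≠ 0 := by
    rintro rfl
    exact (hu.map (algebraMap T S)).ne_zero (by rw [hw, mul_zero])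
  have hdeg : u.natDegree = q + w.natDegree := by
    rw [← hu.natDegree_map (algebraMap T S), hw, hDmonic.natDegree_mul' hw0, hDq]
  refine ⟨reflect u.natDegree u, reflect w.natDegree w, ?_, ?_⟩
  · rw [coeff_reflect, revAt_le (Nat.zero_le _), Nat.sub_zero, hu.coeff_natDegree]
  · rw [← reflect_map, hw, hdeg, reflect_mul _ _ hDdeg le_rfl]
    congr 1
    ext n
    simp only [hD, coeff_reflect, revAt_invol]

theorem PowerSeries.coeff_mul_mem {T : Type*} [CommRing T] {p : Ideal T} (F : PowerSeries T)
    {G : PowerSeries T} (hG : ∀ n, coeff n G ∈ p) (n : ℕ) : coeff n (F * G) ∈ p := by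
  rw [coeff_mul]
  exact p.sum_mem fun _ _ => p.mul_mem_left _ (hG _)

/-- The exponential `exp (bx)`, as a power series over a `ℚ`-algebra. -/
noncomputable def PowerSeries.expMul {S : Type*} [CommRing S] [Algebra ℚ S] (b : S) :
    PowerSeries S :=
  rescale b (exp S)

namespace PowerSeries

variable {T S : Type*} [CommRing T] [CommRing S] [Algebra T S] [Algebra ℚ T] [Algebra ℚ S]

theorem coeff_expMul (b : S) (n : ℕ) :
    coeff n (expMul b) = b ^ n * algebraMap ℚ S (1 / n.factorial) := by
  rw [expMul, coeff_rescale, coeff_exp]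

theorem constantCoeff_expMul (b : S) : constantCoeff (expMul b) = 1 := by
  rw [← coeff_zero_eq_constantCoeff_apply, coeff_expMul]
  simp

theorem expMul_mul_expMul (a b : S) : expMul a * expMul b = expMul (a + b) :=
  exp_mul_exp_eq_exp_add a b

theorem expMul_zero : expMul (0 : S) = 1 := by
  simp [expMul, rescale_zero]

theorem rescale_expMul (a b : S) : rescale a (expMul b) = expMul (a * b) := by
  rw [expMul, rescale_rescale, mul_comm, expMul]

theorem map_expMul (r : T) :
    map (algebraMap T S) (expMul r) = expMul (algebraMap T S r) := by
  rw [expMul, ← rescale_map, map_exp, expMul]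

end PowerSeries

open PowerSeries in
/-- Descent of the integrality of `P(x) exp(bx)` from `T + Tβ` to `T`. -/
theorem exists_coeff_mul_expMul_mem_bot {T S : Type*} [CommRing T] [CommRing S] [Algebra T S]
    [Algebra ℚ T] [Algebra ℚ S] [Algebra.IsIntegral T S] (p : Ideal T) (hp : p.IsPrime)
    (N : Ideal S) (β : S)
    (hfrac : ∀ y : S, ∃ s ∉ p, ∃ r : T, s • y - algebraMap T S r ∈ N)
    (hN : ∀ t, algebraMap T S t ∈ N ↔ t ∈ p)
    (hpow : ∃ s ∉ p, ∃ M : ℕ, ∀ y ∈ N ^ M, s • y ∈ (⊥ : Subalgebra T S))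
    (hβ : β ∈ N) (hβ2 : β ^ 2 ∈ (⊥ : Subalgebra T S))
    (hβp : ∀ t, t • β ∈ (⊥ : Subalgebra T S) ↔ t ∈ p) (b : S) (P : S[X]) (hP : P.coeff 0 = 1)
    (hf : ∀ n, ∃ t₀ t₁ : T, coeff n ((P : PowerSeries S) * expMul b) =
      algebraMap T S t₀ + t₁ • β) :
    ∃ P' : S[X], P'.coeff 0 = 1 ∧
      ∀ n, coeff n ((P' : PowerSeries S) * expMul b) ∈ (⊥ : Subalgebra T S) := by
  set f : PowerSeries S := (P : PowerSeries S) * expMul b with hfdef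
  set φ := PowerSeries.map (algebraMap T S) with hφ
  obtain ⟨F₀, F₁, hF₀, hF₁, hF⟩ : ∃ F₀ F₁ : PowerSeries T, constantCoeff F₀ = 1 ∧
      constantCoeff F₁ = 0 ∧ f = φ F₀ + PowerSeries.C β * φ F₁ := by
    choose t₀ t₁ ht using hf
    refine ⟨PowerSeries.mk fun n => if n = 0 then 1 else t₀ n,
      PowerSeries.mk fun n => if n = 0 then 0 else t₁ n, ?_, ?_, ?_⟩
    · simp [← coeff_zero_eq_constantCoeff_apply]
    · simp [← coeff_zero_eq_constantCoeff_apply]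
    ext n
    rcases eq_or_ne n 0 with rfl | hn
    · simp [hφ, hfdef, hP, constantCoeff_expMul]
      simp [← coeff_zero_eq_constantCoeff_apply]
    · rw [ht]
      simp [hφ, hn, Algebra.smul_def, mul_comm]
  obtain ⟨H₀, hH₀⟩ : ∃ H₀, F₀ * H₀ = 1 :=
    (PowerSeries.isUnit_iff_constantCoeff.mpr (by rw [hF₀]; exact isUnit_one)).exists_right_inv
  set g := F₁ * H₀ with hg
  have hgF : g * F₀ = F₁ := by rw [hg, mul_assoc, mul_comm H₀, hH₀, mul_one]
  obtain ⟨U, W, hU0, hU⟩ := P.exists_map_eq_mul_of_coeff_zero_eq_one (T := T) hP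
  obtain ⟨s, hs, r, hn⟩ := hfrac b
  set n := s • b - algebraMap T S r with hndef
  set σ := algebraMap T S s with hσ
  have hsb : σ * b = n + algebraMap T S r := by
    rw [hndef, sub_add_cancel, Algebra.smul_def]
  set G₀ := rescale s F₀ * expMul (-r) with hG₀
  set G₁ := rescale s F₁ * expMul (-r) with hG₁
  have hG : φ G₀ + PowerSeries.C β * φ G₁ = rescale σ (P : PowerSeries S) * expMul n := by
    have h1 : rescale σ f = φ (rescale s F₀) + PowerSeries.C β * φ (rescale s F₁) := by
      rw [hF, map_add, map_mul, hφ, ← rescale_map, ← rescale_map]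
      congr 2
      ext m
      rcases m with _ | m <;> simp [PowerSeries.coeff_C]
    have h2 : rescale σ f = rescale σ (P : PowerSeries S) * (expMul n * φ (expMul r)) := by
      rw [hfdef, map_mul, rescale_expMul, hsb, hφ, map_expMul, expMul_mul_expMul]
    have h3 : φ (expMul r) * φ (expMul (-r)) = 1 := by
      rw [← map_mul, expMul_mul_expMul, add_neg_cancel, expMul_zero, map_one]
    calc φ G₀ + PowerSeries.C β * φ G₁ = rescale σ f * φ (expMul (-r)) := by
          rw [h1, hG₀, hG₁, map_mul, map_mul]; ring
      _ = _ := by rw [h2, mul_assoc, mul_assoc, h3, mul_one]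
  have hgG : rescale s g * G₀ = G₁ := by
    rw [hG₀, hG₁, ← mul_assoc, ← map_mul, hgF]
  have hg0 : constantCoeff g = 0 := by simp [hg, hF₁]
  clear_value g G₀ G₁
  -- the coefficients of `G₁` of large degree are in `p`
  obtain ⟨K, hK⟩ : ∃ K, ∀ m, K ≤ m → coeff m G₁ ∈ p := by
    obtain ⟨s₀, hs₀, M, hM⟩ := hpow
    refine ⟨P.natDegree + M, fun m hm => ?_⟩
    have hmem : coeff m (φ G₀ + PowerSeries.C β * φ G₁) ∈ N ^ M := by
      rw [hG, PowerSeries.coeff_mul]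
      refine Ideal.sum_mem _ fun ⟨i, j⟩ hij => ?_
      have hij : i + j = m := by simpa using hij
      rcases le_or_gt i P.natDegree with hi | hi
      · refine Ideal.mul_mem_left _ _ ?_
        rw [coeff_expMul]
        exact Ideal.mul_mem_right _ _
          (Ideal.pow_le_pow_right (by omega) (Ideal.pow_mem_pow hn j))
      · simp [coeff_eq_zero_of_natDegree_lt hi]
    have h1 := hM _ hmem
    rw [map_add, PowerSeries.coeff_C_mul, hφ, PowerSeries.coeff_map, PowerSeries.coeff_map, smul_add] at h1
    have h2 : s₀ • algebraMap T S (coeff m G₀) ∈ (⊥ : Subalgebra T S) :=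
      Subalgebra.smul_mem _ (Subalgebra.algebraMap_mem _ _) _
    have h3 : (s₀ * coeff m G₁) • β ∈ (⊥ : Subalgebra T S) := by
      have := Subalgebra.sub_mem _ h1 h2
      rwa [add_sub_cancel_left, mul_comm β, ← Algebra.smul_def, ← mul_smul] at this
    exact (hp.mem_or_mem ((hβp _).mp h3)).resolve_left hs₀
  -- the coefficients of `U g` of large degree are in `p`
  obtain ⟨L, hL⟩ : ∃ L, ∀ m, L ≤ m → coeff m ((U : PowerSeries T) * g) ∈ p := by
    set Φ := PowerSeries.map (Ideal.Quotient.mk N) with hΦ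
    have hΦn : Φ (expMul n) = 1 := by
      ext m
      rw [hΦ, PowerSeries.coeff_map, coeff_expMul, map_mul, map_pow,
        Ideal.Quotient.eq_zero_iff_mem.mpr hn, PowerSeries.coeff_one]
      rcases m with _ | m <;> simp
    have hΦβ : Φ (PowerSeries.C β) = 0 := by
      rw [hΦ, PowerSeries.map_C, Ideal.Quotient.eq_zero_iff_mem.mpr hβ, map_zero]
    have hΦG : Φ (φ G₀) = Φ (rescale σ (P : PowerSeries S)) := by
      have := congrArg Φ hG
      rwa [map_add, map_mul, map_mul, hΦβ, hΦn, zero_mul, add_zero, mul_one] at this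
    have hUφ : φ (rescale s (U : PowerSeries T)) =
        rescale σ (P : PowerSeries S) * rescale σ (W : PowerSeries S) := by
      rw [hφ, ← rescale_map, ← Polynomial.polynomial_map_coe, hU, Polynomial.coe_mul, map_mul]
    have hunit : IsUnit (Φ (rescale σ (P : PowerSeries S))) := by
      rw [PowerSeries.isUnit_iff_constantCoeff, ← coeff_zero_eq_constantCoeff_apply, hΦ,
        PowerSeries.coeff_map, coeff_rescale, Polynomial.coeff_coe, hP]
      simp
    have hkey : Φ (φ (rescale s ((U : PowerSeries T) * g))) =
        Φ (rescale σ (W : PowerSeries S)) * Φ (φ G₁) := by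
      refine hunit.mul_left_cancel ?_
      calc Φ (rescale σ (P : PowerSeries S)) * Φ (φ (rescale s ((U : PowerSeries T) * g)))
          = Φ (φ G₀) * (Φ (φ (rescale s (U : PowerSeries T))) * Φ (φ (rescale s g))) := by
            rw [hΦG, map_mul (rescale s), map_mul φ, map_mul Φ]
        _ = Φ (rescale σ (P : PowerSeries S)) *
            (Φ (rescale σ (W : PowerSeries S)) * Φ (φ G₁)) := by
            rw [hUφ, ← hgG, map_mul Φ, map_mul φ, map_mul Φ]
            ring
    refine ⟨W.natDegree + K, fun m hm => ?_⟩
    have h1 : algebraMap T S (s ^ m * coeff m ((U : PowerSeries T) * g)) ∈ N := by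
      rw [← Ideal.Quotient.eq_zero_iff_mem, ← coeff_rescale, ← PowerSeries.coeff_map,
        ← PowerSeries.coeff_map, hkey, PowerSeries.coeff_mul]
      refine Finset.sum_eq_zero fun ⟨i, j⟩ hij => ?_
      have hij : i + j = m := by simpa using hij
      rcases le_or_gt i W.natDegree with hi | hi
      · have : algebraMap T S (coeff j G₁) ∈ N := (hN _).mpr (hK j (by omega))
        simp [hΦ, hφ, Ideal.Quotient.eq_zero_iff_mem.mpr this]
      · simp [hΦ, coeff_eq_zero_of_natDegree_lt hi]
    refine (hp.mem_or_mem ((hN _).mp h1)).resolve_left fun h => hs (hp.mem_of_pow_mem _ h)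
  set v := trunc L ((U : PowerSeries T) * g) with hv
  have hvp : ∀ m, PowerSeries.coeff m ((U : PowerSeries T) * g - (v : PowerSeries T)) ∈ p := fun m => by
    rw [map_sub, Polynomial.coeff_coe, hv, coeff_trunc]
    split_ifs with h
    · simp
    · rw [sub_zero]; exact hL m (by omega)
  have hv0 : v.coeff 0 = 0 := by
    rw [hv, coeff_trunc]
    split_ifs
    · simp [hg0]
    · rfl
  refine ⟨(U.map (algebraMap T S) - Polynomial.C β * v.map (algebraMap T S)) * P, ?_, ?_⟩
  · simp [mul_coeff_zero, hU0, hv0, hP]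
  · intro m
    have hprod : (((U.map (algebraMap T S) - Polynomial.C β * v.map (algebraMap T S)) * P : S[X]) :
        PowerSeries S) * expMul b = φ ((U : PowerSeries T) * F₀) -
          PowerSeries.C (β ^ 2) * φ ((v : PowerSeries T) * F₁) +
          PowerSeries.C β * φ (F₀ * ((U : PowerSeries T) * g - (v : PowerSeries T))) := by
      rw [Polynomial.coe_mul, mul_assoc, ← hfdef, hF, Polynomial.coe_sub, Polynomial.coe_mul,
        Polynomial.polynomial_map_coe, Polynomial.polynomial_map_coe, Polynomial.coe_C, ← hφ]
      have : F₀ * ((U : PowerSeries T) * g - (v : PowerSeries T)) =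
          (U : PowerSeries T) * F₁ - (v : PowerSeries T) * F₀ := by
        rw [← hgF]; ring
      rw [this]
      simp only [map_mul, map_sub, map_pow]
      ring
    rw [hprod, map_add, map_sub, PowerSeries.coeff_C_mul, PowerSeries.coeff_C_mul, hφ]
    simp only [PowerSeries.coeff_map]
    refine Subalgebra.add_mem _ (Subalgebra.sub_mem _ (Subalgebra.algebraMap_mem _ _)
      (Subalgebra.mul_mem _ hβ2 (Subalgebra.algebraMap_mem _ _))) ?_
    rw [mul_comm, ← Algebra.smul_def]
    exact (hβp _).mpr (coeff_mul_mem _ hvp m)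

theorem HasLinearFibers.subalgebra {R S : Type*} [CommRing R] [CommRing S] [Algebra R S]
    (H : HasLinearFibers R S) (T : Subalgebra R S) : HasLinearFibers T S := by
  intro q hq y
  obtain ⟨s, hs, r, h⟩ := H (q.comap (algebraMap R T)) (hq.comap _) y
  refine ⟨algebraMap R T s, hs, algebraMap R T r, ?_⟩
  rw [algebraMap_smul, ← IsScalarTower.algebraMap_apply]
  refine Ideal.radical_mono ?_ h
  rw [Ideal.map_le_iff_le_comap]
  intro a ha
  rw [Ideal.mem_comap, IsScalarTower.algebraMap_apply R T S]
  exact Ideal.mem_map_of_mem _ ha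

open PowerSeries in
/-- If all fibres of a finite extension are linear, every element `b` of the extension has
a multiple `P(x) exp(bx)` of its exponential series, `P` a polynomial with constant term `1`,
whose coefficients lie in the base. -/
theorem HasLinearFibers.exists_coeff_mul_expMul_mem_bot {R S : Type*} [CommRing R] [CommRing S]
    [Algebra R S] [Algebra ℚ R] [Algebra ℚ S] [IsNoetherianRing R] [Module.Finite R S]
    (H : HasLinearFibers R S) (b : S) :
    ∃ P : S[X], P.coeff 0 = 1 ∧
      ∀ n, PowerSeries.coeff n ((P : PowerSeries S) * expMul b) ∈ (⊥ : Subalgebra R S) := by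
  have hwf : WellFoundedGT (Subalgebra R S) :=
    (StrictMono.wellFoundedGT (f := fun T : Subalgebra R S => Subalgebra.toSubmodule T)
      fun _ _ h => h)
  suffices ∀ T : Subalgebra R S, ∃ P : S[X], P.coeff 0 = 1 ∧
      ∀ n, PowerSeries.coeff n ((P : PowerSeries S) * expMul b) ∈ T from this ⊥
  intro T
  induction T using WellFoundedGT.induction with
  | ind T ih =>
  by_cases hT : T = ⊤
  · exact ⟨1, coeff_one_zero, fun n => hT ▸ Algebra.mem_top⟩
  let _ : Algebra ℚ T := ((algebraMap R T).comp (algebraMap ℚ R)).toAlgebra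
  have hfin : Module.Finite T S := Module.Finite.of_restrictScalars_finite R T S
  have hnoeth : IsNoetherianRing T := by
    have : Module.Finite R T := Module.Finite.of_fg
      (IsNoetherian.noetherian (Subalgebra.toSubmodule T))
    exact IsNoetherianRing.of_finite R T
  have hmem : ∀ y : S, y ∈ (⊥ : Subalgebra T S) ↔ y ∈ T := fun y => by
    rw [Algebra.mem_bot]
    exact ⟨fun ⟨t, ht⟩ => ht ▸ t.2, fun hy => ⟨⟨y, hy⟩, rfl⟩⟩
  have hne : (⊥ : Subalgebra T S) ≠ ⊤ := fun h => hT <| eq_top_iff.mpr fun y _ =>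
    (hmem y).mp (h ▸ Algebra.mem_top)
  obtain ⟨p, N, β, hp, hfrac, hN, hpow, hβ, hβ2, hβp⟩ :=
    (H.subalgebra T).exists_elementary_step hne
  obtain ⟨c, hc⟩ := Algebra.mem_bot.mp hβ2
  let T₁ : Subalgebra R S :=
    { carrier := {y | ∃ t₀ t₁ : T, y = algebraMap T S t₀ + t₁ • β}
      mul_mem' := by
        rintro _ _ ⟨t₀, t₁, rfl⟩ ⟨u₀, u₁, rfl⟩
        refine ⟨t₀ * u₀ + t₁ * u₁ * c, t₀ * u₁ + t₁ * u₀, ?_⟩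
        simp only [Algebra.smul_def, map_add, map_mul, hc]
        ring
      add_mem' := by
        rintro _ _ ⟨t₀, t₁, rfl⟩ ⟨u₀, u₁, rfl⟩
        refine ⟨t₀ + u₀, t₁ + u₁, ?_⟩
        simp only [Algebra.smul_def, map_add]
        ring
      algebraMap_mem' := fun r => ⟨algebraMap R T r, 0, by
        rw [zero_smul, add_zero, ← IsScalarTower.algebraMap_apply]⟩ }
  have hlt : T < T₁ := by
    refine lt_of_le_of_ne (fun y hy => ⟨⟨y, hy⟩, 0, by rw [zero_smul, add_zero]; rfl⟩) fun h => ?_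
    have : β ∈ T := h ▸ (⟨0, 1, by simp⟩ : β ∈ T₁)
    exact p.one_notMem ((hβp 1).mp (by rw [one_smul]; exact (hmem β).mpr this))
  obtain ⟨P, hP, hf⟩ := ih T₁ hlt
  obtain ⟨P', hP', hf'⟩ := _root_.exists_coeff_mul_expMul_mem_bot p hp N β hfrac hN hpow hβ hβ2
    hβp b P hP hf
  exact ⟨P', hP', fun n => (hmem _).mp (hf' n)⟩

/-- The algebra `A[It, ht]`. -/
noncomputable abbrev extendedRees {A : Type*} [CommRing A] (I : Ideal A) (h : A) : Subalgebra A A[X] :=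
  reesAlgebra I ⊔ Algebra.adjoin A {Polynomial.monomial 1 h}

namespace extendedRees

variable {A : Type*} [CommRing A] (I : Ideal A) (h : A)

noncomputable instance : Algebra (reesAlgebra I) (extendedRees I h) :=
  (Subalgebra.inclusion le_sup_left).toAlgebra

instance : IsScalarTower A (reesAlgebra I) (extendedRees I h) :=
  IsScalarTower.of_algebraMap_eq fun _ => rfl

/-- The element `ht` of `A[It, ht]`. -/
noncomputable def gen : extendedRees I h :=
  ⟨Polynomial.monomial 1 h, le_sup_right (a := reesAlgebra I)
    (Algebra.subset_adjoin (Set.mem_singleton _))⟩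

theorem coe_gen : (gen I h : A[X]) = Polynomial.monomial 1 h := rfl

theorem coe_algebraMap (x : reesAlgebra I) :
    (algebraMap (reesAlgebra I) (extendedRees I h) x : A[X]) = x := rfl

variable {I h}

open PowerSeries in
theorem wSubIdeal_of_hasLinearFibers [Algebra ℚ A] [IsNoetherianRing A]
    [Module.Finite (reesAlgebra I) (extendedRees I h)]
    (H : HasLinearFibers (reesAlgebra I) (extendedRees I h)) : WSubIdeal I h := by
  obtain ⟨P, hP, hc⟩ := H.exists_coeff_mul_expMul_mem_bot (-gen I h)
  simp only [Algebra.mem_bot, Set.mem_range] at hc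
  choose c hc using hc
  have hc0 : c 0 = 1 := by
    apply Subtype.ext
    rw [← coe_algebraMap I h, hc]
    simp [hP, constantCoeff_expMul]
  refine ⟨P.natDegree, fun n => (n.factorial : A) * (c n : A[X]).coeff n, fun n =>
    Ideal.mul_mem_left _ _ ((mem_reesAlgebra_iff I _).mp (c n).2 n), fun n hn _ => ?_⟩
  have hsum : ∑ x ∈ Finset.HasAntidiagonal.antidiagonal n, (c x.1 : A[X]).coeff x.1 *
      (h ^ x.2 * algebraMap ℚ A (1 / x.2.factorial)) = 0 := by
    have h1 : (P : PowerSeries (extendedRees I h)) * expMul (-gen I h) * expMul (gen I h) = P := by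
      rw [mul_assoc, expMul_mul_expMul, neg_add_cancel, expMul_zero, mul_one]
    have h2 := congrArg (fun F => ((PowerSeries.coeff n F : extendedRees I h) : A[X]).coeff n) h1
    simp only [PowerSeries.coeff_mul (n := n) (ψ := expMul (gen I h)), Polynomial.coeff_coe,
      coeff_eq_zero_of_natDegree_lt (show P.natDegree < n by omega), ZeroMemClass.coe_zero,
      Polynomial.coeff_zero, AddSubmonoidClass.coe_finsetSum, finsetSum_coeff] at h2
    rw [← h2]
    refine Finset.sum_congr rfl fun ⟨i, j⟩ hij => ?_
    have hij : i + j = n := by simpa using hij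
    have h3 : ((algebraMap ℚ (extendedRees I h) (1 / j.factorial) : extendedRees I h) : A[X]) =
        Polynomial.C (algebraMap ℚ A (1 / j.factorial)) := rfl
    rw [← hc, coeff_expMul, MulMemClass.coe_mul, MulMemClass.coe_mul, h3, coe_algebraMap,
      SubmonoidClass.coe_pow, coe_gen, Polynomial.monomial_pow, one_mul, monomial_mul_C, ← hij,
      coeff_mul_monomial]
  have hfac : ∀ i j : ℕ, i + j = n → (n.factorial : A) * algebraMap ℚ A (1 / j.factorial) =
      n.choose i * i.factorial := fun i j hij => by
    subst hij
    have : ((i + j).factorial : ℚ) * (1 / j.factorial) = (i + j).choose i * i.factorial := by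
      have hj : (j.factorial : ℚ) ≠ 0 := by exact_mod_cast j.factorial_ne_zero
      field_simp
      rw [← Nat.add_choose_mul_factorial_mul_factorial, Nat.choose_symm_add]
      push_cast
      ring
    simpa using congrArg (algebraMap ℚ A) this
  have hsum' := congrArg (fun y => (n.factorial : A) * y) hsum
  simp only [mul_zero, Finset.mul_sum] at hsum'
  rw [Finset.sum_congr rfl (g := fun x : ℕ × ℕ => (n.choose x.1 : A) *
    ((x.1.factorial : A) * (c x.1 : A[X]).coeff x.1) * h ^ x.2) fun ⟨i, j⟩ hij => by
      linear_combination (c i : A[X]).coeff i * h ^ j * hfac i j (by simpa using hij),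
    Finset.Nat.sum_antidiagonal_eq_sum_range_succ_mk, Finset.sum_range_eq_add_Ico _ (by omega)]
    at hsum'
  simpa [hc0, Finset.Ico_add_one_right_eq_Icc] using hsum'

end extendedRees

/-- Over an algebraically closed residue field, two homomorphisms from an algebra of finite type
into a domain agree at `b` as soon as this holds for homomorphisms to the residue field. -/
theorem AlgHom.apply_eq_of_forall_residue {A K S L : Type*} [CommRing A] [Field K] [IsAlgClosed K]
    [Algebra A K] [CommRing S] [Algebra A S] [Algebra.FiniteType A S] [CommRing L] [IsDomain L]
    [Algebra A L] [Algebra K L] [IsScalarTower A K L] (Z : Set S) (b : S)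
    (H : ∀ g₁ g₂ : S →ₐ[A] K, (∀ z ∈ Z, g₁ z = g₂ z) → g₁ b = g₂ b)
    (f₁ f₂ : S →ₐ[A] L) (hf : ∀ z ∈ Z, f₁ z = f₂ z) : f₁ b = f₂ b := by
  classical
  obtain ⟨s, hs⟩ := Algebra.FiniteType.out (R := A) (A := S)
  let B : Subalgebra K L := Algebra.adjoin K (s.image f₁ ∪ s.image f₂ : Finset L)
  have hB : ∀ f : S →ₐ[A] L, (∀ x ∈ s, f x ∈ B) → ∀ x, f x ∈ B.restrictScalars A := by
    intro f h x
    have : Algebra.adjoin A (s : Set S) ≤ (B.restrictScalars A).comap f :=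
      Algebra.adjoin_le fun x hx => h x hx
    exact this (hs ▸ Algebra.mem_top)
  have h₁ := hB f₁ fun x hx => Algebra.subset_adjoin (by simp; exact Or.inl ⟨x, hx, rfl⟩)
  have h₂ := hB f₂ fun x hx => Algebra.subset_adjoin (by simp; exact Or.inr ⟨x, hx, rfl⟩)
  have hft : Algebra.FiniteType K B := B.fg_iff_finiteType.mp (Subalgebra.fg_adjoin_finset _)
  have hjac : IsJacobsonRing B := isJacobsonRing_of_finiteType (A := K)
  let φ₁ : S →ₐ[A] B := f₁.codRestrict (B.restrictScalars A) h₁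
  let φ₂ : S →ₐ[A] B := f₂.codRestrict (B.restrictScalars A) h₂
  suffices φ₁ b - φ₂ b ∈ (⊥ : Ideal B) from
    congrArg Subtype.val (sub_eq_zero.mp (by simpa using this) : φ₁ b = φ₂ b)
  rw [← hjac.out (I := (⊥ : Ideal B)) Ideal.isPrime_bot.isRadical, Ideal.jacobson, Ideal.mem_sInf]
  rintro M ⟨-, hM⟩
  let _ := Ideal.Quotient.field M
  have hfin : Module.Finite K (B ⧸ M) := finite_of_finite_type_of_isJacobsonRing K (B ⧸ M)
  let ε : K ≃ₐ[K] (B ⧸ M) := AlgEquiv.ofBijective (Algebra.ofId K (B ⧸ M))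
    IsAlgClosed.algebraMap_bijective_of_isIntegral
  let π : B →ₐ[A] K :=
    ((ε.symm : (B ⧸ M) →ₐ[K] K).comp (Ideal.Quotient.mkₐ K M)).restrictScalars A
  have := H (π.comp φ₁) (π.comp φ₂) fun z hz => congrArg π (Subtype.ext (hf z hz))
  have := ε.symm.injective this
  exact Ideal.Quotient.eq.mp this

/-- A prime of an integral extension lying over `p` is the kernel of a homomorphism to
any algebraically closed field containing the residue field of `p`. -/
theorem Ideal.exists_algHom_ker_eq {R S L : Type*} [CommRing R] [CommRing S] [Algebra R S]
    [Algebra.IsIntegral R S] [Field L] [IsAlgClosed L] [Algebra R L] (Q : Ideal S) [Q.IsPrime]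
    (hQ : Q.comap (algebraMap R S) = RingHom.ker (algebraMap R L)) :
    ∃ f : S →ₐ[R] L, RingHom.ker f = Q := by
  set p := RingHom.ker (algebraMap R L) with hp
  have hpp : p.IsPrime := RingHom.ker_isPrime _
  have : Q.LiesOver p := ⟨hQ.symm⟩
  let _ : Algebra (R ⧸ p) L := (RingHom.kerLift (algebraMap R L)).toAlgebra
  have htower : IsScalarTower R (R ⧸ p) L := IsScalarTower.of_algebraMap_eq fun _ => rfl
  have hinj : Function.Injective (algebraMap (R ⧸ p) L) := RingHom.kerLift_injective _
  have : FaithfulSMul (R ⧸ p) L := (faithfulSMul_iff_algebraMap_injective _ _).mpr hinj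
  have : Algebra.IsIntegral (R ⧸ p) (S ⧸ Q) := inferInstance
  let g : (S ⧸ Q) →ₐ[R ⧸ p] L := IsAlgClosed.lift
  have hg : RingHom.ker g = ⊥ := by
    apply Ideal.eq_bot_of_comap_eq_bot (R := R ⧸ p)
    rw [eq_bot_iff]
    intro x hx
    rw [Ideal.mem_comap, RingHom.mem_ker, AlgHom.commutes] at hx
    exact hinj (by rw [hx, map_zero])
  refine ⟨(g.restrictScalars R).comp (Ideal.Quotient.mkₐ R Q), ?_⟩
  ext x
  rw [RingHom.mem_ker, ← Ideal.Quotient.eq_zero_iff_mem]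
  change g (Ideal.Quotient.mk Q x) = 0 ↔ _
  rw [← RingHom.mem_ker, hg, Ideal.mem_bot]

/-- An element at which all geometric points over `p` agree is a fraction modulo the radical of
the ideal generated by `p`. -/
theorem Ideal.exists_smul_sub_mem_radical {R S : Type*} [CommRing R] [CommRing S] [Algebra R S]
    [Algebra ℚ R] [Algebra.IsIntegral R S] (p : Ideal R) [p.IsPrime] (b : S)
    (H : ∀ f g : S →ₐ[R] AlgebraicClosure p.ResidueField, f b = g b) :
    ∃ s ∉ p, ∃ r : R, s • b - algebraMap R S r ∈ (p.map (algebraMap R S)).radical := by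
  set F := p.ResidueField with hF
  set L := AlgebraicClosure F with hL
  have hchar : CharZero F := charZero_of_injective_ringHom
    (f := (algebraMap R F).comp (algebraMap ℚ R)) (RingHom.injective _)
  have hmap : ∀ x, algebraMap R L x = 0 ↔ x ∈ p := fun x => by
    rw [IsScalarTower.algebraMap_apply R F L, map_eq_zero, Ideal.algebraMap_residueField_eq_zero]
  obtain ⟨s, hs, r, hsr⟩ : ∃ s ∉ p, ∃ r : R, ∀ f : S →ₐ[R] L, f (s • b - algebraMap R S r) = 0 := by
    by_cases hf : Nonempty (S →ₐ[R] L)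
    · obtain ⟨f⟩ := hf
      have hbot : f b ∈ (⊥ : IntermediateField F L) := by
        rw [InfiniteGalois.mem_bot_iff_fixed]
        exact fun σ => H (((σ : L →ₐ[F] L).restrictScalars R).comp f) f
      obtain ⟨x, hx⟩ := IntermediateField.mem_bot.mp hbot
      obtain ⟨r, s, hs, hrs⟩ := IsFractionRing.div_surjective (R ⧸ p) x
      obtain ⟨r, rfl⟩ := Ideal.Quotient.mk_surjective r
      obtain ⟨s, rfl⟩ := Ideal.Quotient.mk_surjective s
      have hsp : s ∉ p := fun h => nonZeroDivisors.ne_zero hs (Ideal.Quotient.eq_zero_iff_mem.mpr h)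
      refine ⟨s, hsp, r, fun g => ?_⟩
      have h1 : algebraMap R F r / algebraMap R F s = x := hrs
      have h2 : algebraMap R F s ≠ 0 := fun h =>
        hsp (Ideal.algebraMap_residueField_eq_zero.mp h)
      rw [div_eq_iff h2] at h1
      rw [map_sub, map_smul, AlgHom.commutes, H g f, ← hx, Algebra.smul_def,
        IsScalarTower.algebraMap_apply R F L, IsScalarTower.algebraMap_apply R F L, h1, map_mul]
      ring
    · exact ⟨1, p.one_notMem, 0, fun f => absurd ⟨f⟩ hf⟩
  set z := s • b - algebraMap R S r with hz
  obtain ⟨s', hs', n, hn⟩ : ∃ s' ∉ p, ∃ n : ℕ,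
      algebraMap R S s' * z ^ n ∈ p.map (algebraMap R S) := by
    by_contra! hcon
    obtain ⟨Q, hQ, hpQ, hd⟩ := Ideal.exists_le_prime_disjoint (p.map (algebraMap R S))
      (Algebra.algebraMapSubmonoid S p.primeCompl ⊔ Submonoid.powers z) (by
        rw [Set.disjoint_left]
        intro a ha hm
        obtain ⟨_, ⟨s, hs, rfl⟩, _, ⟨n, rfl⟩, rfl⟩ := Submonoid.mem_sup.mp hm
        exact hcon s hs n ha)
    rw [Set.disjoint_left] at hd
    have hQp : Q.comap (algebraMap R S) = RingHom.ker (algebraMap R L) := by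
      ext a
      rw [RingHom.mem_ker, hmap, Ideal.mem_comap]
      refine ⟨fun ha => ?_, fun ha => hpQ (Ideal.mem_map_of_mem _ ha)⟩
      by_contra hap
      exact hd ha (Submonoid.mem_sup_left ⟨a, hap, rfl⟩)
    obtain ⟨f, hf⟩ := Q.exists_algHom_ker_eq hQp
    exact hd (hf ▸ hsr f : z ∈ Q) (Submonoid.mem_sup_right (Submonoid.mem_powers z))
  refine ⟨s' * s, fun h => (Ideal.IsPrime.mem_or_mem ‹_› h).elim hs' hs, s' * r, n + 1, ?_⟩
  have : ((s' * s) • b - algebraMap R S (s' * r)) ^ (n + 1) =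
      algebraMap R S s' ^ n * z * (algebraMap R S s' * z ^ n) := by
    have h1 : (s' * s) • b - algebraMap R S (s' * r) = algebraMap R S s' * z := by
      rw [hz, Algebra.smul_def, Algebra.smul_def, map_mul, map_mul]
      ring
    rw [h1]
    generalize z = w
    ring
  rw [this]
  exact Ideal.mul_mem_left _ _ hn

theorem HasLinearFibers.of_adjoin_eq_top {R S : Type*} [CommRing R] [CommRing S] [Algebra R S]
    {b : S} (hb : Algebra.adjoin R {b} = ⊤)
    (H : ∀ p : Ideal R, p.IsPrime → ∃ s ∉ p, ∃ r : R,
      s • b - algebraMap R S r ∈ (p.map (algebraMap R S)).radical) : HasLinearFibers R S := by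
  intro p hp y
  set N := (p.map (algebraMap R S)).radical
  have hmul : ∀ {s₁ s₂ : R}, s₁ ∉ p → s₂ ∉ p → s₁ * s₂ ∉ p := fun h₁ h₂ hm =>
    (hp.mem_or_mem hm).elim h₁ h₂
  have hy : y ∈ Algebra.adjoin R {b} := hb ▸ Algebra.mem_top
  induction hy using Algebra.adjoin_induction with
  | mem x hx => exact (Set.mem_singleton_iff.mp hx) ▸ H p hp
  | algebraMap r => exact ⟨1, p.one_notMem, r, by simp⟩
  | add x y _ _ hx hy =>
    obtain ⟨s₁, hs₁, r₁, h₁⟩ := hx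
    obtain ⟨s₂, hs₂, r₂, h₂⟩ := hy
    refine ⟨s₁ * s₂, hmul hs₁ hs₂, s₂ * r₁ + s₁ * r₂, ?_⟩
    convert N.add_mem (N.mul_mem_left (algebraMap R S s₂) h₁)
      (N.mul_mem_left (algebraMap R S s₁) h₂) using 1
    simp only [Algebra.smul_def, map_mul, map_add]
    ring
  | mul x y _ _ hx hy =>
    obtain ⟨s₁, hs₁, r₁, h₁⟩ := hx
    obtain ⟨s₂, hs₂, r₂, h₂⟩ := hy
    refine ⟨s₁ * s₂, hmul hs₁ hs₂, r₁ * r₂, ?_⟩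
    convert N.add_mem (N.mul_mem_left (s₂ • y) h₁)
      (N.mul_mem_left (algebraMap R S r₁) h₂) using 1
    simp only [Algebra.smul_def, map_mul]
    ring

theorem IsAlgClosed.of_surjective {k K : Type*} [Field k] [IsAlgClosed k] [Field K] (f : k →+* K)
    (hf : Function.Surjective f) : IsAlgClosed K := by
  let e : k ≃+* K := RingEquiv.ofBijective f ⟨f.injective, hf⟩
  refine IsAlgClosed.of_exists_root K fun P _ hP => ?_
  obtain ⟨x, hx⟩ := IsAlgClosed.exists_root (P.map (e.symm : K →+* k))
    (by rw [degree_map]; exact (degree_pos_of_irreducible hP).ne')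
  refine ⟨e x, e.symm.injective ?_⟩
  have h1 : (e.symm : K →+* k) (P.eval (e x)) = 0 := by
    rw [← Polynomial.eval_map_apply]
    simpa using hx
  rw [map_zero]
  exact h1

section GradedHom

variable {A E : Type*} [CommRing A] [CommRing E] {W : Subalgebra A A[X]}

/-- A subalgebra of `A[t]` is graded if it contains the homogeneous components of its elements. -/
def Subalgebra.IsGraded (W : Subalgebra A A[X]) : Prop :=
  ∀ x ∈ W, ∀ n, Polynomial.monomial n (x.coeff n) ∈ W

namespace Subalgebra.IsGraded

/-- The homogeneous component of degree `n`. -/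
noncomputable def comp (hW : W.IsGraded) (n : ℕ) (x : W) : W := ⟨_, hW x x.2 n⟩

theorem coe_comp (hW : W.IsGraded) (n : ℕ) (x : W) :
    (hW.comp n x : A[X]) = Polynomial.monomial n ((x : A[X]).coeff n) := rfl

theorem comp_mul (hW : W.IsGraded) (n : ℕ) (x y : W) : hW.comp n (x * y) =
    ∑ i ∈ Finset.HasAntidiagonal.antidiagonal n, hW.comp i.1 x * hW.comp i.2 y := by
  apply Subtype.ext
  rw [coe_comp, MulMemClass.coe_mul, Polynomial.coeff_mul, map_sum, AddSubmonoidClass.coe_finsetSum]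
  refine Finset.sum_congr rfl fun ⟨i, j⟩ hij => ?_
  have hij : i + j = n := by simpa using hij
  rw [MulMemClass.coe_mul, coe_comp, coe_comp, Polynomial.monomial_mul_monomial, hij]

theorem comp_comp (hW : W.IsGraded) (m n : ℕ) (x : W) :
    hW.comp m (hW.comp n x) = if n = m then hW.comp n x else 0 := by
  apply Subtype.ext
  rw [coe_comp, coe_comp, Polynomial.coeff_monomial]
  split_ifs with h
  · rw [coe_comp, h]
  · rw [map_zero]; rfl

/-- The homomorphism `x ↦ ∑ φ(xₙ) Xⁿ`, where `xₙ` are the homogeneous components of `x`. -/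
noncomputable def gradedHom (hW : W.IsGraded) (φ : W →+* E) : W →+* PowerSeries E where
  toFun x := PowerSeries.mk fun n => φ (hW.comp n x)
  map_one' := by
    ext n
    have : hW.comp n 1 = if n = 0 then 1 else 0 := by
      apply Subtype.ext
      rw [coe_comp, OneMemClass.coe_one, Polynomial.coeff_one]
      rcases n with _ | n <;> simp
    rw [PowerSeries.coeff_mk, this, PowerSeries.coeff_one, apply_ite φ, map_one, map_zero]
  map_zero' := by
    ext n
    have : hW.comp n 0 = 0 := by
      apply Subtype.ext
      simp [coe_comp]
    rw [PowerSeries.coeff_mk, this, map_zero, map_zero]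
  map_add' x y := by
    ext n
    have : hW.comp n (x + y) = hW.comp n x + hW.comp n y := by
      apply Subtype.ext
      simp [coe_comp]
    simp [this]
  map_mul' x y := by
    ext n
    rw [PowerSeries.coeff_mk, comp_mul, map_sum, PowerSeries.coeff_mul]
    simp

theorem mem_ker_gradedHom (hW : W.IsGraded) (φ : W →+* E) (x : W) :
    x ∈ RingHom.ker (hW.gradedHom φ) ↔ ∀ n, φ (hW.comp n x) = 0 := by
  rw [RingHom.mem_ker, PowerSeries.ext_iff]
  simp [gradedHom]

theorem mem_ker_gradedHom_of_coe_eq (hW : W.IsGraded) (φ : W →+* E) {x : W} {n : ℕ} {a : A}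
    (hx : (x : A[X]) = Polynomial.monomial n a) :
    x ∈ RingHom.ker (hW.gradedHom φ) ↔ φ x = 0 := by
  have h1 : hW.comp n x = x := Subtype.ext (by simp [coe_comp, hx])
  rw [mem_ker_gradedHom]
  refine ⟨fun h => h1 ▸ h n, fun h m => ?_⟩
  rw [← h1, comp_comp]
  split_ifs
  · rw [h1, h]
  · rw [map_zero]

/-- The point of `Proj W` defined by a homomorphism to a domain. -/
noncomputable def toProj [IsDomain E] (hW : W.IsGraded) (φ : W →+* E)
    (hφ : ∃ x : W, (x : A[X]).coeff 0 = 0 ∧ x ∉ RingHom.ker (hW.gradedHom φ)) : ProjOf W :=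
  ⟨RingHom.ker (hW.gradedHom φ), RingHom.ker_isPrime _, fun x hx n _ => by
    rw [mem_ker_gradedHom] at hx
    change hW.comp n x ∈ _
    rw [mem_ker_gradedHom]
    intro m
    rw [comp_comp]
    split_ifs
    · exact hx n
    · exact map_zero φ, hφ⟩

end Subalgebra.IsGraded

end GradedHom

namespace extendedRees

variable {A : Type*} [CommRing A] {I : Ideal A} {h : A}

variable (I h) in
theorem eq_reesAlgebra : extendedRees I h = reesAlgebra (I ⊔ Ideal.span {h}) := by
  apply le_antisymm
  · refine sup_le (fun x hx => ?_) (Algebra.adjoin_le ?_)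
    · rw [mem_reesAlgebra_iff] at hx ⊢
      exact fun n => Ideal.pow_right_mono le_sup_left n (hx n)
    · rw [Set.singleton_subset_iff]
      refine reesAlgebra.monomial_mem.mpr ?_
      rw [pow_one]
      exact Ideal.mem_sup_right (Ideal.mem_span_singleton_self h)
  · rw [← adjoin_monomial_eq_reesAlgebra]
    refine Algebra.adjoin_le ?_
    rintro _ ⟨x, hx, rfl⟩
    obtain ⟨i, hi, y, hy, rfl⟩ := Submodule.mem_sup.mp hx
    obtain ⟨a, rfl⟩ := Ideal.mem_span_singleton'.mp hy
    rw [map_add, ← smul_eq_mul, map_smul]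
    refine Subalgebra.add_mem _ (le_sup_left (a := reesAlgebra I) ?_)
      (Subalgebra.smul_mem _ (gen I h).2 a)
    exact reesAlgebra.monomial_mem.mpr (by rwa [pow_one])

variable (I h) in
theorem isGraded : (extendedRees I h).IsGraded := by
  intro x hx n
  rw [eq_reesAlgebra] at hx ⊢
  exact reesAlgebra.monomial_mem.mpr ((mem_reesAlgebra_iff _ _).mp hx n)

instance [IsNoetherianRing A] : Algebra.FiniteType A (extendedRees I h) := by
  rw [eq_reesAlgebra]
  infer_instance

variable (I h) in
theorem adjoin_gen : Algebra.adjoin (reesAlgebra I) {gen I h} = ⊤ := by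
  rw [eq_top_iff]
  rintro ⟨x, hx⟩ -
  have hle : extendedRees I h ≤
      ((Algebra.adjoin (reesAlgebra I) {gen I h}).restrictScalars A).map (extendedRees I h).val := by
    refine sup_le (fun y hy => ?_) (Algebra.adjoin_le ?_)
    · exact ⟨algebraMap (reesAlgebra I) (extendedRees I h) ⟨y, hy⟩,
        (Algebra.adjoin (reesAlgebra I) {gen I h}).algebraMap_mem _, rfl⟩
    · rw [Set.singleton_subset_iff]
      exact ⟨gen I h, Algebra.subset_adjoin (Set.mem_singleton _), rfl⟩
  obtain ⟨y, hy, hyx⟩ := hle hx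
  exact (show y = ⟨x, hx⟩ from Subtype.ext hyx) ▸ hy

variable (I) in
/-- The irrelevant ideal of the Rees algebra. -/
noncomputable def irrelevant : Ideal (reesAlgebra I) :=
  RingHom.ker (Polynomial.constantCoeff.comp (reesAlgebra I).val.toRingHom)

theorem mem_irrelevant {x : reesAlgebra I} : x ∈ irrelevant I ↔ (x : A[X]).coeff 0 = 0 := by
  rw [irrelevant, RingHom.mem_ker]
  rfl

/-- The element `at` of the Rees algebra, for `a ∈ I`. -/
noncomputable def deg1 (a : I) : reesAlgebra I :=
  ⟨Polynomial.monomial 1 (a : A), reesAlgebra.monomial_mem.mpr (by rw [pow_one]; exact a.2)⟩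

/-- A homomorphism which vanishes in degree one vanishes on the irrelevant ideal. -/
theorem map_eq_zero_of_mem_irrelevant {E : Type*} [CommRing E] (ψ : reesAlgebra I →+* E)
    (hψ : ∀ a : I, ψ (deg1 a) = 0) {x : reesAlgebra I} (hx : x ∈ irrelevant I) : ψ x = 0 := by
  have hmono : ∀ (n : ℕ) (a : A) (ha : a ∈ I ^ (n + 1)),
      ψ ⟨Polynomial.monomial (n + 1) a, reesAlgebra.monomial_mem.mpr ha⟩ = 0 := by
    intro n a ha
    have key : ∃ hm : Polynomial.monomial (n + 1) a ∈ reesAlgebra I, ψ ⟨_, hm⟩ = 0 := by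
      rw [pow_succ'] at ha
      refine Submodule.mul_induction_on ha (fun u hu v hv => ?_) ?_
      · have hm : Polynomial.monomial (n + 1) (u * v) ∈ reesAlgebra I :=
          reesAlgebra.monomial_mem.mpr (by rw [pow_succ']; exact Ideal.mul_mem_mul hu hv)
        have : (⟨_, hm⟩ : reesAlgebra I) =
            deg1 ⟨u, hu⟩ * ⟨Polynomial.monomial n v, reesAlgebra.monomial_mem.mpr hv⟩ := by
          apply Subtype.ext
          simp [deg1, Polynomial.monomial_mul_monomial, add_comm]
        exact ⟨hm, by rw [this, map_mul, hψ, zero_mul]⟩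
      · rintro u v ⟨hu, hu'⟩ ⟨hv, hv'⟩
        have hm : Polynomial.monomial (n + 1) (u + v) ∈ reesAlgebra I := by
          rw [map_add]; exact Subalgebra.add_mem _ hu hv
        have : (⟨_, hm⟩ : reesAlgebra I) = ⟨_, hu⟩ + ⟨_, hv⟩ := Subtype.ext (map_add _ _ _)
        exact ⟨hm, by rw [this, map_add, hu', hv', add_zero]⟩
    exact key.2
  have hmem : ∀ n, Polynomial.monomial n ((x : A[X]).coeff n) ∈ reesAlgebra I := fun n =>
    reesAlgebra.monomial_mem.mpr ((mem_reesAlgebra_iff _ _).mp x.2 n)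
  have hsum : x = ∑ n ∈ (x : A[X]).support, ⟨_, hmem n⟩ := by
    apply Subtype.ext
    rw [AddSubmonoidClass.coe_finsetSum]
    exact (x : A[X]).as_sum_support
  rw [hsum, map_sum]
  refine Finset.sum_eq_zero fun n hn => ?_
  rcases n with _ | n
  · exact absurd (mem_irrelevant.mp hx) (Polynomial.mem_support_iff.mp hn)
  · exact hmono n _ ((mem_reesAlgebra_iff _ _).mp x.2 _)

/-- If contraction is defined on all of `Proj S`, some power of `ht` is in the ideal generated by
the irrelevant ideal of `R`. -/
theorem exists_gen_pow_mem_map_irrelevant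
    (hrel : ∀ q : ProjOf (extendedRees I h), ∃ x ∈ irrelevant I,
      algebraMap (reesAlgebra I) (extendedRees I h) x ∉ q.val) :
    ∃ N : ℕ, gen I h ^ N ∈
      (irrelevant I).map (algebraMap (reesAlgebra I) (extendedRees I h)) := by
  set J := (irrelevant I).map (algebraMap (reesAlgebra I) (extendedRees I h)) with hJ
  change gen I h ∈ J.radical
  rw [Ideal.radical_eq_sInf, Ideal.mem_sInf]
  rintro Q ⟨hJQ, hQ⟩
  by_contra hgen
  have hgen' : gen I h ∉ RingHom.ker ((isGraded I h).gradedHom (E := extendedRees I h ⧸ Q)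
      (Ideal.Quotient.mk Q)) := by
    rwa [(isGraded I h).mem_ker_gradedHom_of_coe_eq _ (coe_gen I h),
      Ideal.Quotient.eq_zero_iff_mem]
  obtain ⟨x, hx, hxq⟩ := hrel ((isGraded I h).toProj (E := extendedRees I h ⧸ Q) (Ideal.Quotient.mk Q)
    ⟨gen I h, by simp [coe_gen, Polynomial.coeff_monomial], hgen'⟩)
  apply hxq
  refine ((isGraded I h).mem_ker_gradedHom _ _).mpr fun n => ?_
  rw [Ideal.Quotient.eq_zero_iff_mem]
  apply hJQ
  let y : reesAlgebra I := ⟨Polynomial.monomial n ((x : A[X]).coeff n),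
    reesAlgebra.monomial_mem.mpr ((mem_reesAlgebra_iff _ _).mp x.2 n)⟩
  have hy : y ∈ irrelevant I := by
    rw [mem_irrelevant] at hx ⊢
    change (Polynomial.monomial n ((x : A[X]).coeff n)).coeff 0 = 0
    rw [Polynomial.coeff_monomial]
    split_ifs with h0
    · rw [h0, hx]
    · rfl
  exact Ideal.mem_map_of_mem _ hy

theorem isIntegral_gen {N : ℕ}
    (hN : gen I h ^ N ∈ (irrelevant I).map (algebraMap (reesAlgebra I) (extendedRees I h))) :
    IsIntegral (reesAlgebra I) (gen I h) := by
  have hsurj : Function.Surjective (Polynomial.aeval (R := reesAlgebra I) (gen I h)) := by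
    rw [← AlgHom.range_eq_top, ← Algebra.adjoin_singleton_eq_range_aeval, adjoin_gen]
  have hcomp : (Polynomial.aeval (R := reesAlgebra I) (gen I h)).toRingHom.comp Polynomial.C =
      algebraMap (reesAlgebra I) (extendedRees I h) := by
    ext1 x
    exact Polynomial.aeval_C _ _
  rw [← hcomp, ← Ideal.map_map] at hN
  obtain ⟨F, hF, hFN⟩ := (Ideal.mem_map_iff_of_surjective _ hsurj).mp hN
  rw [Ideal.mem_map_C_iff] at hF
  set M := N + F.natDegree + 1 with hM
  have hFN' : ∑ i ∈ Finset.range M, F.coeff i • gen I h ^ i = gen I h ^ N := by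
    rw [← hFN]
    exact (Polynomial.aeval_eq_sum_range' (by omega) (gen I h)).symm
  have hmul : ∀ (f : A[X]) (i : ℕ) (r : A), (f * Polynomial.monomial i r).coeff N =
      if i ≤ N then f.coeff (N - i) * r else 0 := fun f i r => by
    rw [← C_mul_X_pow_eq_monomial, ← mul_assoc, coeff_mul_X_pow', coeff_mul_C]
  have hcoeff : h ^ N = ∑ i ∈ Finset.range N, ((F.coeff i : reesAlgebra I) : A[X]).coeff (N - i) *
      h ^ i := by
    have h1 := congrArg (fun y : extendedRees I h => (y : A[X]).coeff N) hFN'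
    simp only [AddSubmonoidClass.coe_finsetSum, Polynomial.finsetSum_coeff, Algebra.smul_def,
      MulMemClass.coe_mul, SubmonoidClass.coe_pow, coe_gen, coe_algebraMap,
      Polynomial.monomial_pow, one_mul, hmul, Polynomial.coeff_monomial_same] at h1
    rw [← h1]
    symm
    refine (Finset.sum_congr rfl fun i hi => ?_).trans (Finset.sum_subset
      (Finset.range_subset_range.mpr (by omega : N ≤ M)) fun i _ hi => ?_)
    · rw [if_pos (Finset.mem_range.mp hi).le]
    · split_ifs with hiN
      · obtain rfl : i = N := le_antisymm hiN (by simpa using hi)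
        rw [Nat.sub_self, mem_irrelevant.mp (hF i), zero_mul]
      · rfl
  let c : Fin N → reesAlgebra I := fun i =>
    ⟨Polynomial.monomial (N - i) (((F.coeff i : reesAlgebra I) : A[X]).coeff (N - i)),
      reesAlgebra.monomial_mem.mpr ((mem_reesAlgebra_iff _ _).mp (F.coeff i).2 _)⟩
  refine ⟨Polynomial.X ^ N - ∑ i : Fin N, Polynomial.C (c i) * Polynomial.X ^ (i : ℕ),
    Polynomial.monic_X_pow_sub (Polynomial.degree_sum_fin_lt c), ?_⟩
  rw [← Polynomial.aeval_def, map_sub, map_pow, Polynomial.aeval_X, map_sum, sub_eq_zero]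
  apply Subtype.ext
  simp only [map_mul, map_pow, Polynomial.aeval_X, Polynomial.aeval_C,
    AddSubmonoidClass.coe_finsetSum, MulMemClass.coe_mul, SubmonoidClass.coe_pow, coe_gen,
    coe_algebraMap, Polynomial.monomial_pow, one_mul, c, Polynomial.monomial_mul_monomial]
  rw [hcoeff, map_sum, Finset.sum_range]
  refine Finset.sum_congr rfl fun i _ => ?_
  rw [Nat.sub_add_cancel i.2.le]

end extendedRees

namespace extendedRees

variable {A : Type*} [CommRing A] {I : Ideal A} {h : A}

/-- If contraction is injective on `Proj S`, a homomorphism from `S` to a field onto which `A`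
surjects is determined at `ht` by its restriction to `R`. -/
theorem apply_gen_eq_of_surjective {K : Type*} [Field K] [Algebra A K]
    (hK : Function.Surjective (algebraMap A K)) {N : ℕ}
    (hN : gen I h ^ N ∈ (irrelevant I).map (algebraMap (reesAlgebra I) (extendedRees I h)))
    (hinj : ∀ q₁ q₂ : ProjOf (extendedRees I h),
      q₁.val.comap (algebraMap (reesAlgebra I) (extendedRees I h)) =
        q₂.val.comap (algebraMap (reesAlgebra I) (extendedRees I h)) → q₁ = q₂)
    (ψ₁ ψ₂ : extendedRees I h →ₐ[A] K)
    (hψ : ∀ x, ψ₁ (algebraMap (reesAlgebra I) (extendedRees I h) x) =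
      ψ₂ (algebraMap (reesAlgebra I) (extendedRees I h) x)) :
    ψ₁ (gen I h) = ψ₂ (gen I h) := by
  by_cases hdeg : ∃ a : I, ψ₁ (algebraMap (reesAlgebra I) (extendedRees I h) (deg1 a)) ≠ 0
  · obtain ⟨a, ha⟩ := hdeg
    set x := algebraMap (reesAlgebra I) (extendedRees I h) (deg1 a) with hx
    have hxa : (x : A[X]) = Polynomial.monomial 1 (a : A) := rfl
    have hx0 : (x : A[X]).coeff 0 = 0 := by rw [hxa, Polynomial.coeff_monomial]; simp
    have hmem : ∀ ψ : extendedRees I h →ₐ[A] K, ψ x ≠ 0 →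
        x ∉ RingHom.ker ((isGraded I h).gradedHom (ψ : extendedRees I h →+* K)) := fun ψ hψx => by
      rwa [(isGraded I h).mem_ker_gradedHom_of_coe_eq _ hxa]
    have hq := hinj
      ((isGraded I h).toProj (ψ₁ : extendedRees I h →+* K) ⟨x, hx0, hmem ψ₁ ha⟩)
      ((isGraded I h).toProj (ψ₂ : extendedRees I h →+* K) ⟨x, hx0, hmem ψ₂ (hψ _ ▸ ha)⟩)
      (by
        ext y
        rw [Ideal.mem_comap, Ideal.mem_comap]
        refine ((isGraded I h).mem_ker_gradedHom _ _).trans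
          (Iff.trans (forall_congr' fun n => ?_) ((isGraded I h).mem_ker_gradedHom _ _).symm)
        have := hψ ⟨Polynomial.monomial n ((y : A[X]).coeff n),
          reesAlgebra.monomial_mem.mpr ((mem_reesAlgebra_iff _ _).mp y.2 n)⟩
        exact Eq.congr this rfl)
    have hker : RingHom.ker ((isGraded I h).gradedHom (ψ₁ : extendedRees I h →+* K)) =
        RingHom.ker ((isGraded I h).gradedHom (ψ₂ : extendedRees I h →+* K)) :=
      congrArg Subtype.val hq
    obtain ⟨c, hc⟩ := hK (ψ₁ (gen I h) / ψ₁ x)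
    have hz : ((gen I h - c • x : extendedRees I h) : A[X]) =
        Polynomial.monomial 1 (h - c * a) := by
      rw [AddSubgroupClass.coe_sub, SetLike.val_smul, hxa, coe_gen, map_sub,
        Polynomial.smul_monomial, smul_eq_mul]
    have h1 : gen I h - c • x ∈
        RingHom.ker ((isGraded I h).gradedHom (ψ₁ : extendedRees I h →+* K)) := by
      rw [(isGraded I h).mem_ker_gradedHom_of_coe_eq _ hz]
      change ψ₁ _ = 0
      rw [map_sub, map_smul, Algebra.smul_def, hc, div_mul_cancel₀ _ ha, sub_self]
    rw [hker, (isGraded I h).mem_ker_gradedHom_of_coe_eq _ hz] at h1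
    change ψ₂ _ = 0 at h1
    rw [map_sub, map_smul, Algebra.smul_def, hc, ← hψ, div_mul_cancel₀ _ ha, sub_eq_zero] at h1
    exact h1.symm
  · push Not at hdeg
    have hzero : ∀ ψ : extendedRees I h →ₐ[A] K,
        (∀ a : I, ψ (algebraMap (reesAlgebra I) (extendedRees I h) (deg1 a)) = 0) →
          ψ (gen I h) = 0 := fun ψ hψ0 => by
      have hle : (irrelevant I).map (algebraMap (reesAlgebra I) (extendedRees I h)) ≤
          RingHom.ker (ψ : extendedRees I h →+* K) :=
        Ideal.map_le_iff_le_comap.mpr fun x hx => map_eq_zero_of_mem_irrelevant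
          ((ψ : extendedRees I h →+* K).comp (algebraMap _ _)) hψ0 hx
      have := hle hN
      rw [RingHom.mem_ker, map_pow] at this
      exact eq_zero_of_pow_eq_zero this
    rw [hzero ψ₁ hdeg, hzero ψ₂ fun a => hψ _ ▸ hdeg a]

theorem apply_gen_eq_of_maximalIdeal_le [IsLocalRing A] [IsNoetherianRing A]
    [IsAlgClosed (IsLocalRing.ResidueField A)] {N : ℕ}
    (hN : gen I h ^ N ∈ (irrelevant I).map (algebraMap (reesAlgebra I) (extendedRees I h)))
    (hinj : ∀ q₁ q₂ : ProjOf (extendedRees I h),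
      q₁.val.comap (algebraMap (reesAlgebra I) (extendedRees I h)) =
        q₂.val.comap (algebraMap (reesAlgebra I) (extendedRees I h)) → q₁ = q₂)
    {L : Type*} [Field L] [Algebra (reesAlgebra I) L]
    (hm : ∀ x ∈ IsLocalRing.maximalIdeal A,
      algebraMap (reesAlgebra I) L (algebraMap A (reesAlgebra I) x) = 0)
    (f g : extendedRees I h →ₐ[reesAlgebra I] L) : f (gen I h) = g (gen I h) := by
  let _ : Algebra A L := ((algebraMap (reesAlgebra I) L).comp (algebraMap A _)).toAlgebra
  have : IsScalarTower A (reesAlgebra I) L := IsScalarTower.of_algebraMap_eq fun _ => rfl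
  let _ : Algebra (IsLocalRing.ResidueField A) L :=
    (Ideal.Quotient.lift (IsLocalRing.maximalIdeal A) (algebraMap A L) hm).toAlgebra
  have : IsScalarTower A (IsLocalRing.ResidueField A) L :=
    IsScalarTower.of_algebraMap_eq fun _ => rfl
  refine AlgHom.apply_eq_of_forall_residue (K := IsLocalRing.ResidueField A)
    (Set.range (algebraMap (reesAlgebra I) (extendedRees I h))) (gen I h) (fun g₁ g₂ hg => ?_)
    (f.restrictScalars A) (g.restrictScalars A) ?_
  · exact apply_gen_eq_of_surjective IsLocalRing.residue_surjective hN hinj g₁ g₂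
      fun x => hg _ ⟨x, rfl⟩
  · rintro _ ⟨x, rfl⟩
    exact (f.commutes x).trans (g.commutes x).symm

theorem hasLinearFibers [IsLocalRing A] [IsNoetherianRing A] [Algebra ℚ A]
    [IsAlgClosed (IsLocalRing.ResidueField A)] (hIm : I.radical = IsLocalRing.maximalIdeal A)
    [Algebra.IsIntegral (reesAlgebra I) (extendedRees I h)] {N : ℕ}
    (hN : gen I h ^ N ∈ (irrelevant I).map (algebraMap (reesAlgebra I) (extendedRees I h)))
    (hinj : ∀ q₁ q₂ : ProjOf (extendedRees I h),
      q₁.val.comap (algebraMap (reesAlgebra I) (extendedRees I h)) =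
        q₂.val.comap (algebraMap (reesAlgebra I) (extendedRees I h)) → q₁ = q₂) :
    HasLinearFibers (reesAlgebra I) (extendedRees I h) := by
  refine HasLinearFibers.of_adjoin_eq_top (adjoin_gen I h) fun p hp => ?_
  by_cases ha : ∃ a : I, algebraMap A (reesAlgebra I) a ∉ p
  · obtain ⟨a, ha⟩ := ha
    refine ⟨_, ha, h • deg1 a, ?_⟩
    convert Ideal.zero_mem _
    apply Subtype.ext
    rw [algebraMap_smul, AddSubgroupClass.coe_sub, SetLike.val_smul, coe_algebraMap,
      SetLike.val_smul, coe_gen, deg1, Polynomial.smul_monomial, Polynomial.smul_monomial,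
      smul_eq_mul, smul_eq_mul, mul_comm, sub_self, ZeroMemClass.coe_zero]
  · push Not at ha
    refine p.exists_smul_sub_mem_radical (gen I h)
      (apply_gen_eq_of_maximalIdeal_le hN hinj fun x hx => ?_)
    rw [← hIm] at hx
    obtain ⟨n, hn⟩ := hx
    rw [IsScalarTower.algebraMap_apply _ p.ResidueField, map_eq_zero,
      Ideal.algebraMap_residueField_eq_zero]
    exact hp.mem_of_pow_mem n (by rw [← map_pow]; exact ha ⟨_, hn⟩)

end extendedRees

/-- Lemma 3.9: let `(A,m,k)` be the local ring of an algebraic variety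
over an algebraically closed field `k` of characteristic 0, `I` an `m`-primary ideal,
`h ∈ A`, `R = A[It]` and `S = A[It, ht] ⊆ A[t]`.  If the induced map
`Proj S → Proj R`, `q ↦ q ∩ R`, is a homeomorphism for the Zariski topologies
(hypotheses `e`, `he`), then `h ∈ *I`. -/
theorem weakSubintegral_of_proj_homeomorph {k A : Type*} [Field k] [IsAlgClosed k]
    [CharZero k] [CommRing A] [IsReduced A] [IsNoetherianRing A] [IsLocalRing A]
    [Algebra k A] [Algebra.EssFiniteType k A]
    (hres : ∀ x : A, ∃ c : k, x - algebraMap k A c ∈ IsLocalRing.maximalIdeal A)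
    (I : Ideal A) (hIm : I.radical = IsLocalRing.maximalIdeal A) (h : A)
    (e : @Homeomorph (ProjOf (reesAlgebra I ⊔ Algebra.adjoin A {Polynomial.monomial 1 h}))
      (ProjOf (reesAlgebra I))
      (projTopology (reesAlgebra I ⊔ Algebra.adjoin A {Polynomial.monomial 1 h}))
      (projTopology (reesAlgebra I)))
    (he : ∀ q : ProjOf (reesAlgebra I ⊔ Algebra.adjoin A {Polynomial.monomial 1 h}),
      (e q).val = Ideal.comap (Subalgebra.inclusion
        (le_sup_left :
          reesAlgebra I ≤ reesAlgebra I ⊔ Algebra.adjoin A {Polynomial.monomial 1 h}))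
        q.val) :
    WSubIdeal I h := by
  let _ : Algebra ℚ A := ((algebraMap k A).comp (algebraMap ℚ k)).toAlgebra
  have hclosed : IsAlgClosed (IsLocalRing.ResidueField A) := by
    refine IsAlgClosed.of_surjective ((IsLocalRing.residue A).comp (algebraMap k A)) fun y => ?_
    obtain ⟨x, rfl⟩ := IsLocalRing.residue_surjective y
    obtain ⟨c, hc⟩ := hres x
    exact ⟨c, (Ideal.Quotient.eq.mpr hc).symm⟩
  obtain ⟨N, hN⟩ := extendedRees.exists_gen_pow_mem_map_irrelevant (I := I) (h := h) fun q => by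
    obtain ⟨x, hx, hxq⟩ := (e q).2.2.2
    rw [he] at hxq
    exact ⟨x, extendedRees.mem_irrelevant.mpr hx, hxq⟩
  have hfin : Module.Finite (reesAlgebra I) (extendedRees I h) := by
    refine ⟨?_⟩
    rw [← Algebra.top_toSubmodule, ← extendedRees.adjoin_gen]
    exact (extendedRees.isIntegral_gen hN).fg_adjoin_singleton
  refine extendedRees.wSubIdeal_of_hasLinearFibers (extendedRees.hasLinearFibers hIm hN
    fun q₁ q₂ hq => ?_)
  refine (@Homeomorph.injective _ _ (projTopology _) (projTopology _) e) (Subtype.ext ?_)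
  rw [he, he]
  exact hq
end

section
/- Let (A,m,k) be a Noetherian local ring whose residue field k is algebraically closed of characteristic 0, let I be an m-primary ideal of A, and let J be a minimal reduction of I. Then J + I_> = *J. -/
open Filter Polynomial

/-- `a` is integral over the ideal `I`: `a^n + c_1 a^{n-1} + ⋯ + c_n = 0` with `c_i ∈ I^i`.
The set of such elements is the integral closure `Ī` of `I`. -/
def IntegralOverIdeal {A : Type*} [CommRing A] (I : Ideal A) (a : A) : Prop :=
  ∃ n : ℕ, 0 < n ∧ ∃ c : ℕ → A, (∀ i, c i ∈ I ^ i) ∧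
    a ^ n + ∑ i ∈ Finset.Icc 1 n, c i * a ^ (n - i) = 0

/-- `J` is a reduction of `I`: `J ⊆ I` and `J̄ = Ī`. -/
def IsReduction {A : Type*} [CommRing A] (J I : Ideal A) : Prop :=
  J ≤ I ∧ ∀ x, IntegralOverIdeal J x ↔ IntegralOverIdeal I x

/-- `J` is a minimal reduction of `I`. -/
def IsMinimalReduction {A : Type*} [CommRing A] (J I : Ideal A) : Prop :=
  IsReduction J I ∧ ∀ J' : Ideal A, IsReduction J' I → J' ≤ J → J' = J

/-- `ord_I(a) = max {n | a ∈ I^n}` (with value `∞` if `a ∈ ⋂ I^n`). -/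
noncomputable def ordI {A : Type*} [CommRing A] (I : Ideal A) (a : A) : ℕ∞ :=
  ⨆ (n : ℕ) (_ : a ∈ I ^ n), (n : ℕ∞)

/-- The sequence `ord_I(a^n)/n`, whose limit is the asymptotic Samuel function `v̄_I(a)`. -/
noncomputable def samuelSeq {A : Type*} [CommRing A] (I : Ideal A) (a : A) (n : ℕ) : ENNReal :=
  (ordI I (a ^ n) : ENNReal) / (n : ENNReal)

/-- `a ∈ I_>`, i.e. `v̄_I(a) > 1`, where `v̄_I(a)` is the limit of `ord_I(a^n)/n`
(this limit always exists in `[0,∞]`). -/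
def MemIgt {A : Type*} [CommRing A] (I : Ideal A) (a : A) : Prop :=
  ∃ L : ENNReal, 1 < L ∧ Filter.Tendsto (samuelSeq I a) Filter.atTop (nhds L)


section IntegralOverIdeal

variable {A : Type*} [CommRing A]

theorem IntegralOverIdeal.mono {J I : Ideal A} (h : J ≤ I) {x : A}
    (hx : IntegralOverIdeal J x) : IntegralOverIdeal I x := by
  obtain ⟨n, hn, c, hc, e⟩ := hx
  exact ⟨n, hn, c, fun i => Ideal.pow_right_mono h i (hc i), e⟩

theorem Ideal.sup_pow_succ_le (J K : Ideal A) (n : ℕ) :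
    (J ⊔ K) ^ (n + 1) ≤ J * (J ⊔ K) ^ n ⊔ K ^ (n + 1) := by
  induction n with
  | zero => simp
  | succ n ih =>
    calc (J ⊔ K) ^ (n + 1 + 1) = (J ⊔ K) * (J ⊔ K) ^ (n + 1) := pow_succ' _ _
      _ ≤ J * (J ⊔ K) ^ (n + 1) ⊔ K * (J ⊔ K) ^ (n + 1) := (Ideal.sup_mul _ _ _).le
      _ ≤ _ := by
        refine sup_le le_sup_left ?_
        refine (Ideal.mul_mono_right ih).trans ?_
        rw [Ideal.mul_sup, ← pow_succ' K]
        refine sup_le_sup_right ?_ _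
        rw [mul_left_comm, pow_succ']
        exact Ideal.mul_mono_right (Ideal.mul_mono_left le_sup_right)

theorem IntegralOverIdeal.exists_sup_pow_succ_le {J : Ideal A} {b : A}
    (hb : IntegralOverIdeal J b) :
    ∃ c, (J ⊔ Ideal.span {b}) ^ (c + 1) ≤ J * (J ⊔ Ideal.span {b}) ^ c := by
  obtain ⟨n, hn, c, hc, e⟩ := hb
  obtain ⟨n, rfl⟩ := Nat.exists_eq_succ_of_ne_zero hn.ne'
  refine ⟨n, (Ideal.sup_pow_succ_le _ _ _).trans (sup_le le_rfl ?_)⟩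
  rw [Ideal.span_singleton_pow, Ideal.span_singleton_le_iff_mem, eq_neg_of_add_eq_zero_left e]
  refine neg_mem (sum_mem fun i hi => ?_)
  obtain ⟨i, rfl⟩ : ∃ k, i = k + 1 := ⟨i - 1, by grind⟩
  have hi' : i ≤ n := by grind
  have h1 : c (i + 1) * b ^ (n + 1 - (i + 1)) ∈
      J ^ (i + 1) * (J ⊔ Ideal.span {b}) ^ (n - i) := by
    rw [Nat.add_sub_add_right]
    exact Ideal.mul_mem_mul (hc _)
      (Ideal.pow_mem_pow (Ideal.mem_sup_right (Ideal.mem_span_singleton_self b)) _)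
  refine SetLike.le_def.mp ?_ h1
  calc J ^ (i + 1) * (J ⊔ Ideal.span {b}) ^ (n - i)
      = J * (J ^ i * (J ⊔ Ideal.span {b}) ^ (n - i)) := by rw [pow_succ', mul_assoc]
    _ ≤ J * ((J ⊔ Ideal.span {b}) ^ i * (J ⊔ Ideal.span {b}) ^ (n - i)) :=
      Ideal.mul_mono_right (Ideal.mul_mono_left (Ideal.pow_right_mono le_sup_left i))
    _ = J * (J ⊔ Ideal.span {b}) ^ n := by rw [← pow_add, Nat.add_sub_cancel' hi']

theorem Ideal.pow_add_le_of_pow_succ_le {J L : Ideal A} {c : ℕ} (h : L ^ (c + 1) ≤ J * L ^ c)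
    (N : ℕ) : L ^ (N + c) ≤ J ^ N * L ^ c := by
  induction N with
  | zero => simp
  | succ N ih =>
    calc L ^ (N + 1 + c) = L * L ^ (N + c) := by rw [← pow_succ']; congr 1; omega
      _ ≤ L * (J ^ N * L ^ c) := Ideal.mul_mono_right ih
      _ = J ^ N * L ^ (c + 1) := by rw [pow_succ']; ring
      _ ≤ J ^ N * (J * L ^ c) := Ideal.mul_mono_right h
      _ = _ := by rw [pow_succ]; ring

theorem IntegralOverIdeal.exists_sup_pow_add_le {J : Ideal A} {b : A}
    (hb : IntegralOverIdeal J b) :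
    ∃ c, ∀ N, (J ⊔ Ideal.span {b}) ^ (N + c) ≤ J ^ N := by
  obtain ⟨c, hc⟩ := hb.exists_sup_pow_succ_le
  exact ⟨c, fun N => (Ideal.pow_add_le_of_pow_succ_le hc N).trans Ideal.mul_le_left⟩

theorem exists_pow_add_le_of_integral {J I : Ideal A} (hfg : I.FG) (hJI : J ≤ I)
    (h : ∀ x ∈ I, IntegralOverIdeal J x) : ∃ c, ∀ N, I ^ (N + c) ≤ J ^ N := by
  classical
  have key : ∀ s : Finset A, (∀ y ∈ s, IntegralOverIdeal J y) →
      ∃ c, ∀ N, (J ⊔ Ideal.span (s : Set A)) ^ (N + c) ≤ J ^ N := by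
    intro s
    induction s using Finset.induction_on with
    | empty => exact fun _ => ⟨0, by simp⟩
    | insert y s _ ih =>
      intro hs
      obtain ⟨c, hc⟩ := ih fun z hz => hs z (Finset.mem_insert_of_mem hz)
      obtain ⟨c', hc'⟩ := ((hs y (Finset.mem_insert_self y s)).mono
        (le_sup_left : J ≤ J ⊔ Ideal.span (s : Set A))).exists_sup_pow_add_le
      refine ⟨c + c', fun N => ?_⟩
      rw [Finset.coe_insert, Ideal.span_insert, sup_comm (Ideal.span {y}), ← sup_assoc,
        ← add_assoc]
      exact (hc' _).trans (hc N)
  obtain ⟨s, rfl⟩ := hfg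
  obtain ⟨c, hc⟩ := key s fun y hy => h y (Ideal.subset_span hy)
  exact ⟨c, fun N => by simpa [sup_eq_right.mpr hJI] using hc N⟩

theorem IntegralOverIdeal.of_monic {J : Ideal A} {x : A} {p : A[X]} (hp : p.Monic)
    (hdeg : 0 < p.natDegree) (hcoeff : ∀ k, p.coeff k ∈ J ^ (p.natDegree - k))
    (hx : p.eval x = 0) : IntegralOverIdeal J x := by
  refine ⟨p.natDegree, hdeg, fun i => if i ≤ p.natDegree then p.coeff (p.natDegree - i) else 0,
    fun i => ?_, ?_⟩
  · dsimp only
    split_ifs with h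
    · simpa [Nat.sub_sub_self h] using hcoeff (p.natDegree - i)
    · exact zero_mem _
  · rw [eval_eq_sum_range, Finset.sum_range_succ, hp.coeff_natDegree, one_mul, add_comm] at hx
    rw [← hx]
    congr 1
    refine Finset.sum_bij' (fun i _ => p.natDegree - i) (fun i _ => p.natDegree - i) ?_ ?_ ?_ ?_ ?_
    all_goals intro i hi
    all_goals simp only [Finset.mem_Icc, Finset.mem_range] at hi ⊢
    all_goals try omega
    rw [if_pos hi.2]

theorem IntegralOverIdeal.of_pow_succ_le [Nontrivial A] [IsNoetherianRing A] {J J' : Ideal A}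
    {n : ℕ} (hJ : J ^ (n + 1) ≤ J' * J ^ n) {x : A} (hx : IntegralOverIdeal J x) :
    IntegralOverIdeal J' x := by
  obtain ⟨c, hc⟩ := hx.exists_sup_pow_succ_le
  set L := J ⊔ Ideal.span {x} with hL
  have hxL : x ∈ L := Ideal.mem_sup_right (Ideal.mem_span_singleton_self x)
  have hM : L ^ (n + c + 1) ≤ J' * L ^ (n + c) := by
    calc L ^ (n + c + 1) = L ^ (n + 1 + c) := by congr 1; omega
      _ ≤ J ^ (n + 1) * L ^ c := Ideal.pow_add_le_of_pow_succ_le hc _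
      _ ≤ J' * J ^ n * L ^ c := Ideal.mul_mono_left hJ
      _ = J' * (J ^ n * L ^ c) := mul_assoc _ _ _
      _ ≤ J' * (L ^ n * L ^ c) :=
        Ideal.mul_mono_right (Ideal.mul_mono_left (Ideal.pow_right_mono le_sup_left n))
      _ = _ := by rw [pow_add]
  set M := n + c
  have hrange : LinearMap.range (algebraMap A (Module.End A (L ^ M : Ideal A)) x) ≤
      J' • (⊤ : Submodule A (L ^ M : Ideal A)) := by
    rintro _ ⟨⟨y, hy⟩, rfl⟩
    rw [Submodule.mem_smul_top_iff]
    refine hM ?_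
    rw [pow_succ']
    exact Ideal.mul_mem_mul hxL hy
  obtain ⟨p, hp, -, hcoeff, hpx⟩ :=
    LinearMap.exists_monic_and_natDegree_eq_and_coeff_mem_pow_and_aeval_eq_zero A _ J' hrange
  have hpx' : p.eval x * x ^ M = 0 := by
    rw [Polynomial.aeval_algebraMap_apply] at hpx
    simpa using congrArg Subtype.val
      (LinearMap.congr_fun hpx ⟨x ^ M, Ideal.pow_mem_pow hxL M⟩)
  refine IntegralOverIdeal.of_monic (p := p * X ^ (M + 1)) (hp.mul (monic_X_pow _)) ?_ ?_ ?_
  · rw [hp.natDegree_mul (monic_X_pow _), natDegree_X_pow]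
    omega
  · intro k
    rw [hp.natDegree_mul (monic_X_pow _), natDegree_X_pow, coeff_mul_X_pow']
    split_ifs with hk
    · convert hcoeff (k - (M + 1)) using 2
      omega
    · exact zero_mem _
  · rw [eval_mul, eval_pow, eval_X, pow_succ, ← mul_assoc, hpx', zero_mul]

end IntegralOverIdeal

section SamuelFunction

variable {A : Type*} [CommRing A] {I : Ideal A} {a : A}

theorem natCast_le_ordI_iff {n : ℕ} : (n : ℕ∞) ≤ ordI I a ↔ a ∈ I ^ n := by
  refine ⟨fun h => ?_, fun h => le_iSup₂_of_le n h le_rfl⟩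
  by_contra hn
  obtain ⟨n, rfl⟩ := Nat.exists_eq_succ_of_ne_zero (n := n) (by rintro rfl; simp at hn)
  have : ordI I a ≤ n := by
    refine iSup₂_le fun m hm => ?_
    have : ¬ n + 1 ≤ m := fun hle => hn (Ideal.pow_le_pow_right hle hm)
    exact_mod_cast (by omega : m ≤ n)
  have := h.trans this
  norm_cast at this
  omega

theorem natCast_div_le_samuelSeq {m n : ℕ} (h : a ^ n ∈ I ^ m) :
    (m : ENNReal) / n ≤ samuelSeq I a n := by
  refine ENNReal.div_le_div_right ?_ _
  have := natCast_le_ordI_iff.mpr h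
  exact_mod_cast this

theorem MemIgt.eventually_pow_mem (h : MemIgt I a) (c : ℕ) :
    ∀ᶠ n in atTop, a ^ n ∈ I ^ (n + c) := by
  obtain ⟨L, hL, hlim⟩ := h
  obtain ⟨r, hr1, hrL⟩ := exists_between hL
  have hr0 : r ≠ ⊤ := (hrL.trans_le le_top).ne
  lift r to NNReal using hr0
  have hr1' : (1 : ℝ) < r := by exact_mod_cast hr1
  obtain ⟨N, hN⟩ := exists_nat_gt (c / ((r : ℝ) - 1))
  filter_upwards [hlim.eventually (lt_mem_nhds hrL), eventually_ge_atTop N, eventually_gt_atTop 0]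
    with n hn hnN hn0
  rw [← natCast_le_ordI_iff]
  by_contra hlt
  rw [not_le] at hlt
  obtain ⟨m, hm⟩ := ENat.ne_top_iff_exists.mp (hlt.trans_le le_top).ne
  rw [samuelSeq, ← hm, ENNReal.lt_div_iff_mul_lt (by simp [hn0.ne']) (by simp)] at hn
  rw [← hm] at hlt
  have h1 : (r : ℝ) * n < m := by
    have : r * (n : NNReal) < m := ENNReal.coe_lt_coe.mp (by simpa using hn)
    exact_mod_cast this
  have h2 : (m : ℝ) < n + c := by exact_mod_cast hlt
  have h3 : (N : ℝ) ≤ n := by exact_mod_cast hnN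
  rw [div_lt_iff₀ (by linarith)] at hN
  nlinarith

theorem tendsto_samuelSeq (I : Ideal A) (a : A) :
    Tendsto (samuelSeq I a) atTop (nhds (⨆ n : ℕ, ⨆ _ : 0 < n, samuelSeq I a n)) := by
  refine tendsto_order.mpr ⟨fun b hb => ?_, fun b hb => ?_⟩
  · simp only [lt_iSup_iff] at hb
    obtain ⟨m, hm, hbm⟩ := hb
    have hb_top : b ≠ ⊤ := (hbm.trans_le le_top).ne
    lift b to NNReal using hb_top
    have hm' : (0 : ℝ) < m := by exact_mod_cast hm
    rw [samuelSeq, ENNReal.lt_div_iff_mul_lt (by simp [hm.ne']) (by simp)] at hbm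
    obtain ⟨p, hp, hbp⟩ : ∃ p : ℕ, a ^ m ∈ I ^ p ∧ (b : ℝ) * m < p := by
      rcases eq_or_ne (ordI I (a ^ m)) ⊤ with h | h
      · obtain ⟨p, hp⟩ := exists_nat_gt ((b : ℝ) * m)
        exact ⟨p, natCast_le_ordI_iff.mp (h ▸ le_top), hp⟩
      · obtain ⟨p, hp⟩ := ENat.ne_top_iff_exists.mp h
        refine ⟨p, natCast_le_ordI_iff.mp hp.le, ?_⟩
        rw [← hp] at hbm
        have : b * (m : NNReal) < p := ENNReal.coe_lt_coe.mp (by simpa using hbm)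
        exact_mod_cast this
    have hpos : 0 < (p : ℝ) - b * m := by linarith
    obtain ⟨N, hN⟩ := exists_nat_gt ((p : ℝ) * m / (p - b * m))
    filter_upwards [eventually_ge_atTop N, eventually_gt_atTop 0] with n hnN hn
    have hmem : a ^ n ∈ I ^ (p * (n / m)) := by
      refine Ideal.mem_of_dvd _ (pow_dvd_pow a (Nat.mul_div_le n m)) ?_
      rw [pow_mul, pow_mul]
      exact Ideal.pow_mem_pow hp _
    refine lt_of_lt_of_le ?_ (natCast_div_le_samuelSeq hmem)
    rw [ENNReal.lt_div_iff_mul_lt (by simp [hn.ne']) (by simp)]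
    have hreal : (b : ℝ) * n < p * (n / m : ℕ) := by
      have h1 : (n : ℝ) < m * (n / m : ℕ) + m := by
        exact_mod_cast (by have := Nat.lt_mul_div_succ n hm; linarith : n < m * (n / m) + m)
      have h2 : (N : ℝ) ≤ n := by exact_mod_cast hnN
      rw [div_lt_iff₀ hpos] at hN
      have h3 : (p : ℝ) * n ≤ p * (m * (n / m : ℕ) + m) := by gcongr
      have h4 : (b : ℝ) * n * m < p * (n / m : ℕ) * m := by nlinarith
      exact lt_of_mul_lt_mul_right h4 hm'.le
    have : b * (n : NNReal) < p * (n / m : ℕ) := by exact_mod_cast hreal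
    exact_mod_cast this
  · filter_upwards [eventually_gt_atTop 0] with n hn
    exact (le_iSup₂ (f := fun (n : ℕ) (_ : 0 < n) => samuelSeq I a n) n hn).trans_lt hb

theorem MemIgt.of_pow_mem {n : ℕ} (hn : 0 < n) (h : a ^ n ∈ I ^ (n + 1)) : MemIgt I a := by
  refine ⟨_, ?_, tendsto_samuelSeq I a⟩
  refine lt_of_lt_of_le ?_ ((natCast_div_le_samuelSeq h).trans
    (le_iSup₂ (f := fun (n : ℕ) (_ : 0 < n) => samuelSeq I a n) n hn))
  rw [ENNReal.lt_div_iff_mul_lt (by simp [hn.ne']) (by simp), one_mul]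
  exact_mod_cast n.lt_succ_self

end SamuelFunction

section BinomialEquations

variable {A : Type*} [CommRing A]

theorem WSubIdeal.add_of_pow_mem {J : Ideal A} {j k : A} (hj : j ∈ J) {q : ℕ}
    (hk : ∀ n, q < n → k ^ n ∈ J ^ n) : WSubIdeal J (j + k) := by
  let Λ : A[X] →ₗ[A] A := ∑ l ∈ Finset.range (q + 1), k ^ l • lcoeff A l
  have hΛ : ∀ p, Λ p = ∑ l ∈ Finset.range (q + 1), k ^ l * p.coeff l := fun p => by simp [Λ]
  have hΛ_low : ∀ p : A[X], p.natDegree ≤ q → Λ p = p.eval k := fun p hp => by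
    rw [hΛ, eval_eq_sum_range' (Nat.lt_succ_of_le hp)]
    exact Finset.sum_congr rfl fun _ _ => mul_comm _ _
  have hΛ_pow : ∀ i, Λ ((X - C k) ^ i) ∈ J ^ i := by
    intro i
    rcases le_or_gt i q with hi | hi
    · rw [hΛ_low _ ((natDegree_pow_le_of_le i (natDegree_X_sub_C_le k)).trans (by simpa))]
      rcases i with _ | i <;> simp
    · rw [hΛ]
      refine sum_mem fun l hl => ?_
      have hl' : l ≤ i := by grind
      have : k ^ l * ((X - C k) ^ i).coeff l = ((-1) ^ (i - l) * i.choose l) * k ^ i := by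
        rw [sub_eq_add_neg, ← C_neg, coeff_X_add_C_pow, neg_pow, ← Nat.add_sub_cancel' hl',
          pow_add k, Nat.add_sub_cancel' hl']
        ring
      rw [this]
      exact Ideal.mul_mem_left _ _ (hk i hi)
  refine ⟨q, fun n => Λ ((X - C (j + k)) ^ n), fun n => ?_, fun n hn _ => ?_⟩
  · dsimp only
    have : (X - C (j + k)) ^ n = ((X - C k) + C (-j)) ^ n := by
      congr 1
      simp
      ring
    rw [this, add_pow, map_sum]
    refine sum_mem fun i hi => ?_
    have hi' : i ≤ n := by grind
    have : Λ ((X - C k) ^ i * C (-j) ^ (n - i) * (n.choose i : A[X])) =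
        n.choose i * (Λ ((X - C k) ^ i) * (-j) ^ (n - i)) := by
      have : (X - C k) ^ i * C (-j) ^ (n - i) * (n.choose i : A[X]) =
          (n.choose i * (-j) ^ (n - i)) • (X - C k) ^ i := by
        rw [smul_eq_C_mul]
        simp
        ring
      rw [this, map_smul, smul_eq_mul]
      ring
    rw [this]
    refine Ideal.mul_mem_left _ _ ?_
    rw [← Nat.add_sub_cancel' hi', pow_add J, Nat.add_sub_cancel' hi']
    exact Ideal.mul_mem_mul (hΛ_pow i) (Ideal.pow_mem_pow (neg_mem hj) _)
  · have h0 : Λ (X ^ n) = 0 := by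
      rw [hΛ]
      refine Finset.sum_eq_zero fun l hl => ?_
      rw [coeff_X_pow, if_neg (by grind), mul_zero]
    have h1 : Λ 1 = 1 := by rw [hΛ_low 1 (by simp), eval_one]
    have hX : (X : A[X]) ^ n = ((X - C (j + k)) + C (j + k)) ^ n := by simp
    rw [hX, add_pow, map_sum, Finset.range_eq_Ico, Finset.sum_eq_sum_Ico_succ_bot (by omega)] at h0
    rw [← h0]
    have hterm : ∀ i, Λ ((X - C (j + k)) ^ i * C (j + k) ^ (n - i) * (n.choose i : A[X])) =
        n.choose i * Λ ((X - C (j + k)) ^ i) * (j + k) ^ (n - i) := fun i => by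
      have : (X - C (j + k)) ^ i * C (j + k) ^ (n - i) * (n.choose i : A[X]) =
          (n.choose i * (j + k) ^ (n - i)) • (X - C (j + k)) ^ i := by
        rw [smul_eq_C_mul]
        simp
        ring
      rw [this, map_smul, smul_eq_mul]
      ring
    congr 1
    · rw [hterm]
      simp [h1]
    · refine Finset.sum_congr ?_ fun i _ => (hterm i).symm
      ext i
      simp [Nat.succ_le_iff]

theorem WSubIdeal.integralOverIdeal {J : Ideal A} {b : A} (h : WSubIdeal J b) :
    IntegralOverIdeal J b := by
  obtain ⟨q, a, ha, h⟩ := h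
  exact ⟨q + 1, q.succ_pos, fun i => (q + 1).choose i * a i,
    fun i => Ideal.mul_mem_left _ _ (ha i), h (q + 1) le_rfl (by omega)⟩

end BinomialEquations

section AppellPolynomials

/-- The polynomial `X ^ n + ∑ i ∈ [1, n], (n choose i) * a i * X ^ (n - i)`. -/
noncomputable def appellPolynomial {D : Type*} [CommRing D] (a : ℕ → D) (n : ℕ) : D[X] :=
  X ^ n + ∑ i ∈ Finset.Icc 1 n, C (n.choose i * a i) * X ^ (n - i)

variable {D : Type*} [CommRing D]

theorem appellPolynomial_eval (a : ℕ → D) (n : ℕ) (b : D) :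
    (appellPolynomial a n).eval b =
      b ^ n + ∑ i ∈ Finset.Icc 1 n, (n.choose i : D) * a i * b ^ (n - i) := by
  simp [appellPolynomial, eval_finsetSum]

theorem appellPolynomial_map {E : Type*} [CommRing E] (φ : D →+* E) (a : ℕ → D) (n : ℕ) :
    (appellPolynomial a n).map φ = appellPolynomial (fun i => φ (a i)) n := by
  simp [appellPolynomial, Polynomial.map_sum]

theorem appellPolynomial_degree_sum_lt (a : ℕ → D) (n : ℕ) :
    (∑ i ∈ Finset.Icc 1 n, C ((n.choose i : D) * a i) * X ^ (n - i)).degree < (n : WithBot ℕ) := by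
  refine (degree_sum_le _ _).trans_lt ((Finset.sup_lt_iff (WithBot.bot_lt_coe n)).mpr ?_)
  intro i hi
  refine (degree_C_mul_X_pow_le _ _).trans_lt ?_
  exact Nat.cast_lt.mpr (by grind)

theorem appellPolynomial_monic (a : ℕ → D) (n : ℕ) : (appellPolynomial a n).Monic :=
  monic_X_pow_add (appellPolynomial_degree_sum_lt a n)

theorem appellPolynomial_natDegree [Nontrivial D] (a : ℕ → D) (n : ℕ) :
    (appellPolynomial a n).natDegree = n := by
  refine natDegree_eq_of_degree_eq_some ?_
  rw [appellPolynomial, degree_add_eq_left_of_degree_lt, degree_X_pow]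
  rw [degree_X_pow]
  exact appellPolynomial_degree_sum_lt a n

theorem appellPolynomial_derivative (a : ℕ → D) (n : ℕ) :
    derivative (appellPolynomial a (n + 1)) = (n + 1 : D[X]) * appellPolynomial a n := by
  rw [appellPolynomial, appellPolynomial, derivative_add, derivative_X_pow, derivative_sum,
    Finset.sum_Icc_succ_top (by omega), mul_add, Finset.mul_sum]
  simp only [Nat.sub_self, pow_zero, mul_one, derivative_C, add_zero, derivative_C_mul_X_pow]
  congr 1
  · simp
  · refine Finset.sum_congr rfl fun i hi => ?_
    have h := congrArg (Nat.cast : ℕ → D[X]) (Nat.choose_mul_succ_eq n i)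
    push_cast at h
    have h2 : n + 1 - i - 1 = n - i := by omega
    rw [h2]
    simp only [C_mul, C_eq_natCast]
    linear_combination (-C (a i) * X ^ (n - i)) * h

theorem appellPolynomial_iterate_derivative (a : ℕ → D) (j n : ℕ) :
    ∃ c : D, derivative^[j] (appellPolynomial a (n + j)) = C c * appellPolynomial a n := by
  induction j with
  | zero => exact ⟨1, by simp⟩
  | succ j ih =>
    obtain ⟨c, hc⟩ := ih
    refine ⟨(n + j + 1) * c, ?_⟩
    have h : (((n + j : ℕ) : D[X]) + 1) = C ((n + j + 1 : D)) := by simp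
    rw [Function.iterate_succ_apply, ← add_assoc, appellPolynomial_derivative, h,
      iterate_derivative_C_mul, hc, C_mul, mul_assoc]

/-- Over a field of characteristic zero, the system of equations in the definition of weak
subintegrality has at most one solution. -/
theorem appellPolynomial_root_unique {E : Type*} [Field E] [CharZero E] {a : ℕ → E} {q : ℕ}
    {x y : E} (hx : ∀ n, q + 1 ≤ n → n ≤ 2 * q + 1 → (appellPolynomial a n).eval x = 0)
    (hy : ∀ n, q + 1 ≤ n → n ≤ 2 * q + 1 → (appellPolynomial a n).eval y = 0) : x = y := by
  by_contra hxy
  have hne : appellPolynomial a (2 * q + 1) ≠ 0 := (appellPolynomial_monic a _).ne_zero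
  have hdvd : ∀ z, (∀ n, q + 1 ≤ n → n ≤ 2 * q + 1 → (appellPolynomial a n).eval z = 0) →
      (X - C z) ^ (q + 1) ∣ appellPolynomial a (2 * q + 1) := by
    intro z hz
    refine (pow_dvd_pow _ ?_).trans (pow_rootMultiplicity_dvd _ z)
    refine Nat.succ_le_of_lt ((lt_rootMultiplicity_iff_isRoot_iterate_derivative hne).mpr ?_)
    intro j hj
    obtain ⟨c, hc⟩ := appellPolynomial_iterate_derivative a j (2 * q + 1 - j)
    rw [Nat.sub_add_cancel (by omega)] at hc
    rw [hc, IsRoot, eval_mul, hz _ (by omega) (by omega), mul_zero]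
  have hcop : IsCoprime ((X - C x) ^ (q + 1)) ((X - C y) ^ (q + 1)) :=
    (isCoprime_X_sub_C_of_isUnit_sub (sub_ne_zero.mpr hxy).isUnit).pow
  have hdeg := natDegree_le_of_dvd (hcop.mul_dvd (hdvd x hx) (hdvd y hy)) hne
  rw [appellPolynomial_natDegree, natDegree_mul (pow_ne_zero _ (X_sub_C_ne_zero x))
    (pow_ne_zero _ (X_sub_C_ne_zero y)), natDegree_pow, natDegree_pow, natDegree_X_sub_C,
    natDegree_X_sub_C] at hdeg
  omega

theorem appellPolynomial_root_mem_range_field {K E : Type*} [Field K] [Field E] [Algebra K E]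
    [CharZero K] {a : ℕ → K} {q : ℕ} {b : E}
    (hb : ∀ n, q + 1 ≤ n → n ≤ 2 * q + 1 →
      (appellPolynomial (fun i => algebraMap K E (a i)) n).eval b = 0) :
    b ∈ (algebraMap K E).range := by
  let F := AlgebraicClosure E
  have : CharZero F := charZero_of_injective_algebraMap (algebraMap K F).injective
  have haeval : ∀ n, q + 1 ≤ n → n ≤ 2 * q + 1 → aeval b (appellPolynomial a n) = 0 := by
    intro n h1 h2
    rw [← eval_map_algebraMap, appellPolynomial_map, hb n h1 h2]
  have hint : IsIntegral K b :=
    ⟨appellPolynomial a (q + 1), appellPolynomial_monic a _, haeval _ le_rfl (by omega)⟩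
  have hF : ∀ z : F, aeval z (minpoly K b) = 0 → ∀ n, q + 1 ≤ n → n ≤ 2 * q + 1 →
      (appellPolynomial (fun i => algebraMap K F (a i)) n).eval z = 0 := by
    intro z hz n h1 h2
    rw [← appellPolynomial_map, eval_map_algebraMap]
    obtain ⟨r, hr⟩ := minpoly.dvd K b (haeval n h1 h2)
    rw [hr, map_mul, hz, zero_mul]
  have hb' : aeval (algebraMap E F b) (minpoly K b) = 0 := by
    rw [aeval_algebraMap_apply, minpoly.aeval, map_zero]
  have hcard : Fintype.card ((minpoly K b).rootSet F) = (minpoly K b).natDegree :=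
    card_rootSet_eq_natDegree (minpoly.irreducible hint).separable
      (IsAlgClosed.splits _)
  have hle : Fintype.card ((minpoly K b).rootSet F) ≤ 1 := by
    refine Fintype.card_le_one_iff.mpr fun y z => Subtype.ext ?_
    exact appellPolynomial_root_unique (hF _ (aeval_eq_zero_of_mem_rootSet y.2))
      (hF _ (aeval_eq_zero_of_mem_rootSet z.2))
  refine minpoly.natDegree_eq_one_iff.mp (le_antisymm (hcard ▸ hle) (minpoly.natDegree_pos hint))

/-- Over an integrally closed domain of characteristic zero, solutions in an extension field of the
system of equations in the definition of weak subintegrality already lie in the domain. -/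
theorem appellPolynomial_root_mem_range {S E : Type*} [CommRing S] [IsDomain S]
    [IsIntegrallyClosed S] [CharZero S] [Field E] {φ : S →+* E} (hφ : Function.Injective φ)
    {a : ℕ → S} {q : ℕ} {b : E}
    (hb : ∀ n, q + 1 ≤ n → n ≤ 2 * q + 1 →
      (appellPolynomial (fun i => φ (a i)) n).eval b = 0) :
    ∃ s, φ s = b := by
  algebraize [φ]
  have : FaithfulSMul S E := (faithfulSMul_iff_algebraMap_injective S E).mpr hφ
  let := FractionRing.liftAlgebra S E
  have : CharZero (FractionRing S) :=
    charZero_of_injective_algebraMap (IsFractionRing.injective S (FractionRing S))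
  have hint : IsIntegral S b := by
    refine ⟨appellPolynomial a (q + 1), appellPolynomial_monic a _, ?_⟩
    rw [← eval_map, RingHom.algebraMap_toAlgebra, appellPolynomial_map, hb _ le_rfl (by omega)]
  obtain ⟨t, rfl⟩ : b ∈ (algebraMap (FractionRing S) E).range := by
    refine appellPolynomial_root_mem_range_field
      (a := fun i => algebraMap S (FractionRing S) (a i)) (q := q) fun n h1 h2 => ?_
    simp only [← IsScalarTower.algebraMap_apply]
    exact hb n h1 h2
  obtain ⟨s, hs⟩ := IsIntegrallyClosed.isIntegral_iff.mp
    ((isIntegral_algebraMap_iff (algebraMap (FractionRing S) E).injective).mp hint)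
  refine ⟨s, ?_⟩
  rw [← hs, ← IsScalarTower.algebraMap_apply]
  rfl

end AppellPolynomials

section AnalyticIndependence

open IsLocalRing

variable {A : Type*} [CommRing A]

theorem MvPolynomial.IsHomogeneous.aeval_mul {ι B : Type*} [CommRing B] [Algebra A B]
    {n : ℕ} {F : MvPolynomial ι A} (hF : F.IsHomogeneous n) (r : B) (v : ι → B) :
    MvPolynomial.aeval (fun i => r * v i) F = r ^ n * MvPolynomial.aeval v F := by
  rw [MvPolynomial.aeval_def, MvPolynomial.aeval_def, MvPolynomial.eval₂_eq,
    MvPolynomial.eval₂_eq, Finset.mul_sum]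
  refine Finset.sum_congr rfl fun d hd => ?_
  have hdeg : ∑ i ∈ d.support, d i = n := (hF.degree_eq_sum_deg_support hd).symm
  simp_rw [mul_pow]
  rw [Finset.prod_mul_distrib, Finset.prod_pow_eq_pow_sum, hdeg]
  ring

theorem MvPolynomial.IsHomogeneous.eval_sub_eval_mem {ι : Type*} {J J' : Ideal A} {y z : ι → A}
    (hy : ∀ i, y i ∈ J) (hz : ∀ i, z i ∈ J) (hyz : ∀ i, y i - z i ∈ J') {n : ℕ}
    {F : MvPolynomial ι A} (hF : F.IsHomogeneous (n + 1)) :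
    F.eval y - F.eval z ∈ J' * J ^ n := by
  have mem_pow : ∀ {w : ι → A}, (∀ i, w i ∈ J) → ∀ {m : ℕ} {G : MvPolynomial ι A},
      G.IsHomogeneous m → G.eval w ∈ J ^ m := fun {w} hw m G hG =>
    Ideal.pow_right_mono (Ideal.span_le.mpr (Set.range_subset_iff.mpr hw)) m
      ((Ideal.mem_span_pow_iff_exists_isHomogeneous w _).mpr ⟨G, hG, rfl⟩)
  have hone : ∀ {G : MvPolynomial ι A}, G.IsHomogeneous 1 → G.eval y - G.eval z ∈ J' := by
    intro G hG
    rw [← MvPolynomial.mem_homogeneousSubmodule,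
      MvPolynomial.homogeneousSubmodule_one_eq_span_X] at hG
    induction hG using Submodule.span_induction with
    | mem G h =>
      obtain ⟨i, rfl⟩ := h
      simpa using hyz i
    | zero => simp
    | add G H _ _ hG hH =>
      rw [map_add, map_add, add_sub_add_comm]
      exact add_mem hG hH
    | smul c G _ hG =>
      rw [MvPolynomial.smul_eval, MvPolynomial.smul_eval, ← mul_sub]
      exact Ideal.mul_mem_left _ _ hG
  induction n generalizing F with
  | zero => simpa using hone hF
  | succ n ih =>
    rw [← MvPolynomial.mem_homogeneousSubmodule, ← MvPolynomial.homogeneousSubmodule_one_pow,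
      pow_succ', MvPolynomial.homogeneousSubmodule_one_pow] at hF
    induction hF using Submodule.mul_induction_on' with
    | mem_mul_mem G hG H hH =>
      have : (G * H).eval y - (G * H).eval z =
          (G.eval y - G.eval z) * H.eval y + G.eval z * (H.eval y - H.eval z) := by
        rw [map_mul, map_mul]
        ring
      rw [this]
      refine add_mem (Ideal.mul_mem_mul (hone hG) (mem_pow hy hH)) ?_
      rw [pow_succ', mul_left_comm]
      exact Ideal.mul_mem_mul (by simpa using mem_pow hz hG) (ih hH)
    | add G _ H _ hG hH =>
      rw [map_add, map_add, add_sub_add_comm]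
      exact add_mem hG hH

variable [IsNoetherianRing A] [IsLocalRing A]

theorem map_residue_eq_zero_of_eval_mem [Infinite (ResidueField A)] {ι : Type*} [Fintype ι]
    {x : ι → A} (hmin : ∀ J' ≤ Ideal.span (Set.range x), ∀ n : ℕ,
      Ideal.span (Set.range x) ^ (n + 1) ≤ J' * Ideal.span (Set.range x) ^ n →
        J' = Ideal.span (Set.range x))
    (hcard : Fintype.card ι ≤ (Ideal.span (Set.range x)).spanFinrank)
    {n : ℕ} {F : MvPolynomial ι A} (hF : F.IsHomogeneous n)
    (hFx : F.eval x ∈ maximalIdeal A * Ideal.span (Set.range x) ^ n) :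
    F.map (residue A) = 0 := by
  classical
  set J := Ideal.span (Set.range x) with hJ
  have hxJ : ∀ i, x i ∈ J := fun i => Ideal.subset_span ⟨i, rfl⟩
  rcases n with _ | n
  · rw [← MvPolynomial.mem_homogeneousSubmodule, MvPolynomial.homogeneousSubmodule_zero] at hF
    obtain ⟨c, rfl⟩ := Submodule.mem_one.mp hF
    have : c ∈ maximalIdeal A := by simpa using hFx
    simp [MvPolynomial.algebraMap_eq, (residue_eq_zero_iff c).mpr this]
  by_contra hne
  obtain ⟨c', hc'⟩ : ∃ c', (F.map (residue A)).eval c' ≠ 0 := by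
    by_contra! h
    exact hne (MvPolynomial.funext fun c' => by rw [h, map_zero])
  obtain ⟨c, rfl⟩ : ∃ c : ι → A, (fun i => residue A (c i)) = c' :=
    ⟨fun i => (residue_surjective (c' i)).choose,
      funext fun i => (residue_surjective (c' i)).choose_spec⟩
  have hFc : IsUnit (F.eval c) := by
    rw [← residue_ne_zero_iff_isUnit]
    rwa [MvPolynomial.eval_map, ← Function.comp_def, ← MvPolynomial.eval₂_comp] at hc'
  obtain ⟨i₀, hi₀⟩ : ∃ i, IsUnit (c i) := by
    by_contra! h
    have hzero := MvPolynomial.IsHomogeneous.eval_sub_eval_mem (J := ⊤) (J' := maximalIdeal A)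
      (y := c) (z := 0) (by simp) (by simp) (fun i => by simpa using h i) hF
    have h0 : F.eval (0 : ι → A) = 0 := by simpa using hF.aeval_mul (0 : A) (0 : ι → A)
    rw [h0, sub_zero] at hzero
    exact (mem_maximalIdeal _).mp (Ideal.mul_le_left hzero) hFc
  set w : ι → A := fun i => c i₀ * x i - c i * x i₀ with hw
  set J' := Ideal.span (w '' {i | i ≠ i₀}) with hJ'
  have hwJ' : ∀ i, w i ∈ J' := by
    intro i
    by_cases hi : i = i₀
    · subst hi
      simp [hw, mul_comm]
    · exact Ideal.subset_span ⟨i, hi, rfl⟩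
  have hJ'J : J' ≤ J := by
    refine Ideal.span_le.mpr ?_
    rintro _ ⟨i, -, rfl⟩
    exact sub_mem (Ideal.mul_mem_left _ _ (hxJ _)) (Ideal.mul_mem_left _ _ (hxJ _))
  have hJsup : J = J' ⊔ Ideal.span {x i₀} := by
    refine le_antisymm ?_ (sup_le hJ'J (Ideal.span_le.mpr (by simpa using hxJ i₀)))
    refine Ideal.span_le.mpr ?_
    rintro _ ⟨i, rfl⟩
    refine (Ideal.unit_mul_mem_iff_mem _ hi₀).mp ?_
    rw [show c i₀ * x i = w i + c i * x i₀ by simp [hw]]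
    exact add_mem (Ideal.mem_sup_left (hwJ' i))
      (Ideal.mem_sup_right (Ideal.mul_mem_left _ _ (Ideal.mem_span_singleton_self _)))
  have heval_smul : ∀ (r : A) (v : ι → A), F.eval (fun i => r * v i) = r ^ (n + 1) * F.eval v :=
    fun r v => by simpa using hF.aeval_mul r v
  have hpow : x i₀ ^ (n + 1) ∈ J' * J ^ n ⊔ maximalIdeal A * J ^ (n + 1) := by
    have h1 := hF.eval_sub_eval_mem (J := J) (J' := J') (y := fun i => c i₀ * x i)
      (z := fun i => x i₀ * c i) (fun i => Ideal.mul_mem_left _ _ (hxJ i))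
      (fun i => Ideal.mul_mem_right _ _ (hxJ i₀)) (fun i => by simpa [hw, mul_comm] using hwJ' i)
    rw [heval_smul, heval_smul] at h1
    refine (Ideal.mul_unit_mem_iff_mem _ hFc).mp ?_
    rw [show x i₀ ^ (n + 1) * F.eval c = -(c i₀ ^ (n + 1) * F.eval x -
      x i₀ ^ (n + 1) * F.eval c) + c i₀ ^ (n + 1) * F.eval x by ring]
    exact add_mem (Ideal.mem_sup_left (neg_mem h1))
      (Ideal.mem_sup_right (Ideal.mul_mem_left _ _ hFx))
  have hJpow : J ^ (n + 1) ≤ J' * J ^ n := by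
    refine Submodule.le_of_le_smul_of_le_jacobson_bot (I := maximalIdeal A)
      (IsNoetherian.noetherian _) (maximalIdeal_le_jacobson _) ?_
    have h := Ideal.sup_pow_succ_le J' (Ideal.span {x i₀}) n
    rw [← hJsup, Ideal.span_singleton_pow] at h
    exact h.trans (sup_le le_sup_left (Ideal.span_le.mpr (by simpa using hpow)))
  have hlt : (w '' {i | i ≠ i₀}).ncard < Fintype.card ι := by
    refine (Set.ncard_image_le (Set.toFinite _)).trans_lt ?_
    rw [← Nat.card_eq_fintype_card, ← Set.ncard_univ]
    refine Set.ncard_lt_ncard ?_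
    rw [Set.ssubset_univ_iff, Set.ne_univ_iff_exists_notMem]
    exact ⟨i₀, by simp⟩
  have hrank := Submodule.spanFinrank_span_le_ncard_of_finite (R := A)
    (Set.toFinite (w '' {i | i ≠ i₀}))
  change J'.spanFinrank ≤ _ at hrank
  rw [hmin J' hJ'J n hJpow] at hrank
  omega

end AnalyticIndependence

section FiberCone

open IsLocalRing

theorem MvPolynomial.isHomogeneous_one_of_appellPolynomial_root {ι k : Type*} [Field k]
    {α : ℕ → MvPolynomial ι k} (hα : ∀ i, (α i).IsHomogeneous i) {n : ℕ} (hn : 0 < n)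
    {γ : MvPolynomial ι k} (hγ : (appellPolynomial α n).eval γ = 0) : γ.IsHomogeneous 1 := by
  rw [appellPolynomial_eval] at hγ
  have hdeg : γ.totalDegree ≤ 1 := by
    by_contra! h
    have hpow : (γ ^ n).totalDegree < n * γ.totalDegree := by
      rw [eq_neg_of_add_eq_zero_left hγ, MvPolynomial.totalDegree_neg]
      refine (MvPolynomial.totalDegree_finsetSum _ _).trans_lt
        ((Finset.sup_lt_iff (by positivity)).mpr fun i hi => ?_)
      obtain ⟨hi1, hin⟩ := Finset.mem_Icc.mp hi
      have h1 : ((n.choose i : MvPolynomial ι k) * α i * γ ^ (n - i)).totalDegree ≤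
          i + (n - i) * γ.totalDegree := by
        refine (MvPolynomial.totalDegree_mul _ _).trans (add_le_add ?_
          (MvPolynomial.totalDegree_pow _ _))
        refine (MvPolynomial.totalDegree_mul _ _).trans ?_
        rw [← map_natCast (MvPolynomial.C (R := k) (σ := ι)), MvPolynomial.totalDegree_C, zero_add]
        exact (hα i).totalDegree_le
      refine h1.trans_lt ?_
      obtain ⟨m, rfl⟩ := Nat.exists_eq_add_of_le hin
      rw [Nat.add_sub_cancel_left, add_mul]
      exact Nat.add_lt_add_right (by nlinarith) _
    have hpow' : ∀ m, (γ ^ m).totalDegree = m * γ.totalDegree := by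
      have hγ0 : γ ≠ 0 := by rintro rfl; simp at h
      intro m
      induction m with
      | zero => simp
      | succ m ih =>
        rw [pow_succ, MvPolynomial.totalDegree_mul_of_isDomain (pow_ne_zero _ hγ0) hγ0, ih,
          Nat.succ_mul]
    exact hpow.ne (hpow' n)
  have hzero : MvPolynomial.constantCoeff γ = 0 := by
    have h := congrArg MvPolynomial.constantCoeff hγ
    rw [map_add, map_sum, Finset.sum_eq_zero, map_pow, add_zero, map_zero] at h
    · exact pow_eq_zero_iff hn.ne' |>.mp h
    · intro i hi
      have : MvPolynomial.constantCoeff (α i) = 0 :=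
        (hα i).coeff_eq_zero (by simp; grind)
      simp [this]
  intro d hd
  have h1 : d.degree ≤ 1 :=
    (MvPolynomial.le_totalDegree (MvPolynomial.mem_support_iff.mpr hd)).trans hdeg
  have h2 : d.degree ≠ 0 := fun h => hd ((Finsupp.degree_eq_zero_iff d).mp h ▸ hzero)
  have h3 : Finsupp.weight (1 : ι → ℕ) d = d.degree :=
    (DFunLike.congr_fun Finsupp.degree_eq_weight_one d).symm
  omega

variable {A : Type*} [CommRing A]

theorem MvPolynomial.map_homogeneousComponent {ι B : Type*} [CommRing B] (f : A →+* B) (n : ℕ)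
    (F : MvPolynomial ι A) :
    (homogeneousComponent n F).map f = homogeneousComponent n (F.map f) := by
  ext d
  simp only [coeff_map, coeff_homogeneousComponent]
  split_ifs <;> simp

/-- The homomorphism to the Rees algebra of `L` given by elements of `L` placed in degree one. -/
noncomputable def toReesAlgebra {ι : Type*} (L : Ideal A) (x : ι → A) (hx : ∀ i, x i ∈ L) :
    MvPolynomial ι A →ₐ[A] reesAlgebra L :=
  MvPolynomial.aeval fun i =>
    ⟨monomial 1 (x i), reesAlgebra.monomial_mem.mpr (by simpa using hx i)⟩

variable {ι : Type*} {L : Ideal A} {x : ι → A} (hx : ∀ i, x i ∈ L)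

theorem coe_toReesAlgebra_of_isHomogeneous {n : ℕ} {F : MvPolynomial ι A}
    (hF : F.IsHomogeneous n) :
    (toReesAlgebra L x hx F : A[X]) = monomial n (F.eval x) := by
  have h1 : (toReesAlgebra L x hx F : A[X]) =
      MvPolynomial.aeval (fun i => X * algebraMap A A[X] (x i)) F := by
    change (reesAlgebra L).val (toReesAlgebra L x hx F) = _
    rw [toReesAlgebra, MvPolynomial.comp_aeval_apply]
    congr 2
    ext1 i
    simp [← C_mul_X_eq_monomial]
  have h2 : MvPolynomial.aeval (fun i => algebraMap A A[X] (x i)) F =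
      algebraMap A A[X] (MvPolynomial.aeval x F) := MvPolynomial.aeval_algebraMap_apply A[X] x F
  rw [h1, hF.aeval_mul, h2]
  rw [← C_mul_X_pow_eq_monomial, mul_comm, Polynomial.algebraMap_eq,
    MvPolynomial.aeval_eq_eval]

theorem coeff_toReesAlgebra (F : MvPolynomial ι A) (n : ℕ) :
    (toReesAlgebra L x hx F : A[X]).coeff n = (MvPolynomial.homogeneousComponent n F).eval x := by
  conv_lhs => rw [← MvPolynomial.sum_homogeneousComponent F, map_sum]
  rw [AddSubmonoidClass.coe_finsetSum, finsetSum_coeff]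
  simp_rw [coe_toReesAlgebra_of_isHomogeneous hx
    (MvPolynomial.homogeneousComponent_isHomogeneous _ F), coeff_monomial]
  rw [Finset.sum_ite_eq' _ n]
  split_ifs with h
  · rfl
  · rw [MvPolynomial.homogeneousComponent_eq_zero n F (by simpa using h), map_zero]

theorem coeff_mem_of_mem_map_reesAlgebra {𝔞 : Ideal A} {p : reesAlgebra L}
    (hp : p ∈ 𝔞.map (algebraMap A (reesAlgebra L))) (n : ℕ) :
    (p : A[X]).coeff n ∈ 𝔞 * L ^ n := by
  induction hp using Submodule.span_induction generalizing n with
  | mem p h =>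
    obtain ⟨a, ha, rfl⟩ := h
    rcases n with _ | n
    · simpa using ha
    · simp
  | zero => simp
  | add p q _ _ hp hq => simpa using add_mem (hp n) (hq n)
  | smul r p _ hp =>
    rw [smul_eq_mul, MulMemClass.coe_mul, coeff_mul]
    refine sum_mem fun ij hij => ?_
    rw [← Finset.HasAntidiagonal.mem_antidiagonal.mp hij, pow_add, mul_left_comm]
    exact Ideal.mul_mem_mul (r.2 _) (hp _)

theorem exists_ringHom_residue [IsLocalRing A] {B : Type*} [CommRing B] {μ : reesAlgebra L →+* B}
    (hμ : (maximalIdeal A).map (algebraMap A (reesAlgebra L)) ≤ RingHom.ker μ) :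
    ∃ θ : MvPolynomial ι (ResidueField A) →+* B, ∀ F : MvPolynomial ι A,
      θ (F.map (residue A)) = μ (toReesAlgebra L x hx F) := by
  let f : ResidueField A →+* B :=
    Ideal.Quotient.lift (maximalIdeal A) (μ.comp (algebraMap A (reesAlgebra L))) fun a ha =>
      hμ (Ideal.mem_map_of_mem _ ha)
  have hf : ∀ a, f (residue A a) = μ (algebraMap A _ a) := fun a => rfl
  let θ := MvPolynomial.eval₂Hom f fun i => μ (toReesAlgebra L x hx (MvPolynomial.X i))
  refine ⟨θ, fun F => ?_⟩
  have : θ.comp (MvPolynomial.map (residue A)) =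
      μ.comp (toReesAlgebra L x hx : MvPolynomial ι A →+* reesAlgebra L) := by
    refine MvPolynomial.ringHom_ext (fun a => ?_) fun i => ?_
    · simp only [RingHom.comp_apply, MvPolynomial.map_C, θ, MvPolynomial.eval₂Hom_C, hf]
      congr 1
      exact ((toReesAlgebra L x hx).commutes a).symm
    · simp [θ]
  exact RingHom.congr_fun this F

end FiberCone

section WeakSubintegralClosure

open IsLocalRing

variable {A : Type*} [CommRing A] [IsLocalRing A]

theorem disjoint_map_maximalIdeal_reesAlgebra {ι : Type*} {x : ι → A} {L : Ideal A}
    (hx : ∀ i, x i ∈ L)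
    (hind : ∀ (n : ℕ) (F : MvPolynomial ι A), F.IsHomogeneous n →
      F.eval x ∈ maximalIdeal A * Ideal.span (Set.range x) ^ n → F.map (residue A) = 0)
    (hm : Ideal.span (Set.range x) ≤ maximalIdeal A) {e : ℕ} (he : maximalIdeal A ^ e ≤ L)
    {c : ℕ} (hc : ∀ N, L ^ (N + c) ≤ Ideal.span (Set.range x) ^ N) {F : MvPolynomial ι A}
    (hF : toReesAlgebra L x hx F ∈ (maximalIdeal A).map (algebraMap A (reesAlgebra L))) :
    F.map (residue A) = 0 := by
  set J := Ideal.span (Set.range x)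
  have hcomp : ∀ n, (MvPolynomial.homogeneousComponent n F).map (residue A) = 0 := by
    intro n
    have hn : (MvPolynomial.homogeneousComponent n F).eval x ∈ maximalIdeal A * L ^ n :=
      coeff_toReesAlgebra hx F n ▸ coeff_mem_of_mem_map_reesAlgebra hF n
    have hle : (maximalIdeal A * L ^ n) ^ (e * (c + 1)) ≤
        maximalIdeal A * J ^ (n * (e * (c + 1))) := by
      calc (maximalIdeal A * L ^ n) ^ (e * (c + 1))
          = (maximalIdeal A ^ e) ^ (c + 1) * L ^ (n * (e * (c + 1))) := by
            rw [mul_pow, ← pow_mul, ← pow_mul]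
        _ ≤ L ^ (c + 1) * L ^ (n * (e * (c + 1))) :=
            Ideal.mul_mono_left (Ideal.pow_right_mono he _)
        _ = L ^ (n * (e * (c + 1)) + 1 + c) := by
            rw [← pow_add]
            congr 1
            ring
        _ ≤ J ^ (n * (e * (c + 1)) + 1) := hc _
        _ ≤ maximalIdeal A * J ^ (n * (e * (c + 1))) := by
            rw [pow_succ']
            exact Ideal.mul_mono_left hm
    have h := hind (n * (e * (c + 1))) (MvPolynomial.homogeneousComponent n F ^ (e * (c + 1)))
      ((MvPolynomial.homogeneousComponent_isHomogeneous n F).pow _)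
      (hle (by rw [map_pow]; exact Ideal.pow_mem_pow hn _))
    rw [map_pow] at h
    exact eq_zero_of_pow_eq_zero h
  rw [← MvPolynomial.sum_homogeneousComponent F, map_sum]
  exact Finset.sum_eq_zero fun n _ => hcomp n

theorem exists_sub_pow_mem_of_wSubIdeal [CharZero (ResidueField A)] {ι : Type*} {x : ι → A}
    (hind : ∀ (n : ℕ) (F : MvPolynomial ι A), F.IsHomogeneous n →
      F.eval x ∈ maximalIdeal A * Ideal.span (Set.range x) ^ n → F.map (residue A) = 0)
    (hm : Ideal.span (Set.range x) ≤ maximalIdeal A)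
    {e : ℕ} (he : maximalIdeal A ^ e ≤ Ideal.span (Set.range x)) {b : A}
    (hb : WSubIdeal (Ideal.span (Set.range x)) b) :
    ∃ j ∈ Ideal.span (Set.range x), ∃ N, 0 < N ∧
      (b - j) ^ N ∈ maximalIdeal A * (Ideal.span (Set.range x) ⊔ Ideal.span {b}) ^ N := by
  obtain ⟨c, hc⟩ := hb.integralOverIdeal.exists_sup_pow_add_le
  obtain ⟨q, a, ha, hab⟩ := hb
  set J := Ideal.span (Set.range x) with hJ
  set L := J ⊔ Ideal.span {b} with hL
  have hJL : J ≤ L := le_sup_left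
  have hx : ∀ i, x i ∈ L := fun i => hJL (Ideal.subset_span ⟨i, rfl⟩)
  have hbL : b ∈ L := Ideal.mem_sup_right (Ideal.mem_span_singleton_self b)
  choose F hF hFa using fun i => (Ideal.mem_span_pow_iff_exists_isHomogeneous x (a i)).mp (ha i)
  let ψ := toReesAlgebra L x hx
  let bt : reesAlgebra L := ⟨monomial 1 b, reesAlgebra.monomial_mem.mpr (by simpa using hbL)⟩
  let 𝔪 := (maximalIdeal A).map (algebraMap A (reesAlgebra L))
  let α : ℕ → MvPolynomial ι (ResidueField A) := fun i => (F i).map (residue A)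
  have hbt : ∀ n, q + 1 ≤ n → n ≤ 2 * q + 1 →
      (appellPolynomial (fun i => ψ (F i)) n).eval bt = 0 := by
    intro n h1 h2
    have key : (((appellPolynomial (fun i => ψ (F i)) n).eval bt : reesAlgebra L) : A[X]) =
        monomial n (b ^ n + ∑ i ∈ Finset.Icc 1 n, (n.choose i : A) * a i * b ^ (n - i)) := by
      rw [appellPolynomial_eval, map_add, map_sum, AddMemClass.coe_add,
        AddSubmonoidClass.coe_finsetSum]
      congr 1
      · simp [bt, monomial_pow]
      · refine Finset.sum_congr rfl fun i hi => ?_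
        have hi' : i + (n - i) = n := by grind
        rw [MulMemClass.coe_mul, MulMemClass.coe_mul, SubmonoidClass.coe_pow,
          coe_toReesAlgebra_of_isHomogeneous hx (hF i), hFa, monomial_pow, one_mul, mul_assoc,
          monomial_mul_monomial, hi', mul_assoc]
        simp [← C_mul_X_pow_eq_monomial, mul_assoc]
    rw [hab n h1 h2, map_zero] at key
    exact Subtype.ext key
  have hroot : ∀ (Q : Ideal (reesAlgebra L)) [Q.IsPrime]
      (θ : MvPolynomial ι (ResidueField A) →+* Q.ResidueField),
      (∀ G, θ (G.map (residue A)) = algebraMap (reesAlgebra L) Q.ResidueField (ψ G)) →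
      ∀ n, q + 1 ≤ n → n ≤ 2 * q + 1 →
        (appellPolynomial (fun i => θ (α i)) n).eval
          (algebraMap (reesAlgebra L) Q.ResidueField bt) = 0 := by
    intro Q _ θ hθ n h1 h2
    have h := congrArg (algebraMap (reesAlgebra L) Q.ResidueField) (hbt n h1 h2)
    rw [map_zero, ← eval_map_apply, appellPolynomial_map] at h
    simpa only [α, hθ] using h
  obtain ⟨γ, hγ⟩ : ∃ γ : MvPolynomial ι (ResidueField A),
      ∀ n, q + 1 ≤ n → n ≤ 2 * q + 1 → (appellPolynomial α n).eval γ = 0 := by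
    let M : Submonoid (reesAlgebra L) :=
      ((nonZeroDivisors (MvPolynomial ι (ResidueField A))).comap
        (MvPolynomial.map (residue A))).map ψ
    have hM : ∀ G : MvPolynomial ι A, G.map (residue A) ≠ 0 → ψ G ∈ M := fun G hG =>
      ⟨G, mem_nonZeroDivisors_of_ne_zero hG, rfl⟩
    have hdisj : Disjoint (𝔪 : Set (reesAlgebra L)) M := by
      rw [Set.disjoint_left]
      rintro _ h ⟨G, hG, rfl⟩
      exact nonZeroDivisors.ne_zero hG
        (disjoint_map_maximalIdeal_reesAlgebra hx hind hm (he.trans hJL) hc h)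
    obtain ⟨Q, hQ, h𝔪Q, hQM⟩ := Ideal.exists_le_prime_disjoint 𝔪 M hdisj
    obtain ⟨θ, hθ⟩ := exists_ringHom_residue hx (h𝔪Q.trans Q.ker_algebraMap_residueField.ge)
    have hinj : Function.Injective θ := by
      refine (injective_iff_map_eq_zero θ).mpr fun s hs => ?_
      obtain ⟨G, rfl⟩ := MvPolynomial.map_surjective _ residue_surjective s
      by_contra hG
      rw [hθ, Ideal.algebraMap_residueField_eq_zero] at hs
      exact Set.disjoint_left.mp hQM hs (hM G hG)
    obtain ⟨γ, hγ⟩ := appellPolynomial_root_mem_range hinj (hroot Q θ hθ)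
    refine ⟨γ, fun n h1 h2 => hinj ?_⟩
    rw [map_zero, ← eval_map_apply, appellPolynomial_map, hγ]
    exact hroot Q θ hθ n h1 h2
  have hγ1 : γ.IsHomogeneous 1 :=
    MvPolynomial.isHomogeneous_one_of_appellPolynomial_root (fun i => (hF i).map _) q.succ_pos
      (hγ (q + 1) le_rfl (by omega))
  obtain ⟨G, hG, rfl⟩ : ∃ G : MvPolynomial ι A, G.IsHomogeneous 1 ∧ G.map (residue A) = γ := by
    obtain ⟨G, rfl⟩ := MvPolynomial.map_surjective _ residue_surjective γ
    refine ⟨_, MvPolynomial.homogeneousComponent_isHomogeneous 1 G, ?_⟩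
    rw [MvPolynomial.map_homogeneousComponent, MvPolynomial.homogeneousComponent_eq_self hγ1]
  have hrad : bt - ψ G ∈ 𝔪.radical := by
    rw [Ideal.radical_eq_sInf, Ideal.mem_sInf]
    rintro Q ⟨h𝔪Q, hQ⟩
    obtain ⟨θ, hθ⟩ := exists_ringHom_residue hx (h𝔪Q.trans Q.ker_algebraMap_residueField.ge)
    have : CharZero Q.ResidueField :=
      charZero_of_injective_ringHom (θ.comp MvPolynomial.C).injective
    have heq : algebraMap (reesAlgebra L) Q.ResidueField bt = θ (G.map (residue A)) := by
      refine appellPolynomial_root_unique (hroot Q θ hθ) fun n h1 h2 => ?_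
      rw [← appellPolynomial_map, eval_map_apply, hγ n h1 h2, map_zero]
    rw [← Ideal.algebraMap_residueField_eq_zero, map_sub, heq, hθ, sub_self]
  obtain ⟨N, hN⟩ := hrad
  refine ⟨G.eval x, ?_, N + 1, N.succ_pos, ?_⟩
  · simpa using (Ideal.mem_span_pow_iff_exists_isHomogeneous (n := 1) x _).mpr ⟨G, hG, rfl⟩
  · have hN' : (bt - ψ G) ^ (N + 1) ∈ 𝔪 := by
      rw [pow_succ']
      exact Ideal.mul_mem_left _ _ hN
    have hcoe : (((bt - ψ G) ^ (N + 1) : reesAlgebra L) : A[X]) =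
        monomial (N + 1) ((b - G.eval x) ^ (N + 1)) := by
      rw [SubmonoidClass.coe_pow, AddSubgroupClass.coe_sub,
        coe_toReesAlgebra_of_isHomogeneous hx hG, ← map_sub, monomial_pow, one_mul]
    have h := coeff_mem_of_mem_map_reesAlgebra hN' (N + 1)
    rwa [hcoe, coeff_monomial_same] at h

variable [IsNoetherianRing A]

theorem IsMinimalReduction.exists_generators [Infinite (ResidueField A)] {I J : Ideal A}
    (hJ : IsMinimalReduction J I) : ∃ (s : Finset A), Ideal.span (Set.range ((↑) : s → A)) = J ∧
      ∀ (n : ℕ) (F : MvPolynomial s A), F.IsHomogeneous n →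
        F.eval (↑) ∈ maximalIdeal A * Ideal.span (Set.range ((↑) : s → A)) ^ n →
          F.map (residue A) = 0 := by
  obtain ⟨s, hcard, hs⟩ := Submodule.FG.exists_span_finset_card_eq_spanFinrank
    (IsNoetherian.noetherian J)
  have hs' : Ideal.span (Set.range ((↑) : s → A)) = J := by
    rw [Subtype.range_coe_subtype]
    exact hs
  refine ⟨s, hs', fun n F hF hFx => map_residue_eq_zero_of_eval_mem ?_ ?_ hF hFx⟩
  · rw [hs']
    intro J' hJ'J m hm
    refine hJ.2 J' ⟨hJ'J.trans hJ.1.1, fun x => ?_⟩ hJ'J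
    rw [← hJ.1.2]
    exact ⟨fun h => h.mono hJ'J, fun h => h.of_pow_succ_le hm⟩
  · rw [hs', ← hcard, Fintype.card_coe]

end WeakSubintegralClosure

theorem integralOverIdeal_of_mem {A : Type*} [CommRing A] {I : Ideal A} {x : A} (hx : x ∈ I) :
    IntegralOverIdeal I x :=
  ⟨1, one_pos, fun i => if i = 1 then -x else 0, fun i => by
    beta_reduce
    split_ifs with h <;> simp [h, hx],
    by simp⟩

/-- Theorem 4.8: let `(A,m,k)` be a Noetherian local ring with `k`
algebraically closed of characteristic 0, `I` an `m`-primary ideal, and `J` a minimal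
reduction of `I`.  Then `J + I_> = *J`.  Here `K` is the ideal `I_>` (hypothesis `hK`),
and `m`-primary is expressed by `rad I = m`. -/
theorem weakSubintegralClosure_of_minimalReduction {A : Type*} [CommRing A]
    [IsNoetherianRing A] [IsLocalRing A]
    [IsAlgClosed (IsLocalRing.ResidueField A)] [CharZero (IsLocalRing.ResidueField A)]
    (I : Ideal A) (hI : I.radical = IsLocalRing.maximalIdeal A)
    (J : Ideal A) (hJ : IsMinimalReduction J I)
    (K : Ideal A) (hK : ∀ x : A, x ∈ K ↔ MemIgt I x) :
    ∀ x : A, x ∈ J + K ↔ WSubIdeal J x := by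
  obtain ⟨c, hc⟩ := exists_pow_add_le_of_integral (IsNoetherian.noetherian I) hJ.1.1
    fun x hx => (hJ.1.2 x).mpr (integralOverIdeal_of_mem hx)
  have hJm : J ≤ IsLocalRing.maximalIdeal A := hI ▸ hJ.1.1.trans Ideal.le_radical
  obtain ⟨e, he⟩ : ∃ e, IsLocalRing.maximalIdeal A ^ e ≤ J := by
    obtain ⟨e, he⟩ := I.exists_radical_pow_le_of_fg (IsNoetherian.noetherian _)
    rw [hI] at he
    refine ⟨e * (1 + c), ?_⟩
    rw [pow_mul]
    simpa using (Ideal.pow_right_mono he (1 + c)).trans (hc 1)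
  intro b
  constructor
  · intro hb
    obtain ⟨j, hj, k, hk, rfl⟩ := Submodule.mem_sup.mp hb
    obtain ⟨q, hq⟩ := eventually_atTop.mp (((hK k).mp hk).eventually_pow_mem c)
    exact WSubIdeal.add_of_pow_mem hj (q := q) fun n hn => hc n (hq n hn.le)
  · intro hb
    obtain ⟨s, rfl, hind⟩ := hJ.exists_generators
    obtain ⟨c', hc'⟩ := hb.integralOverIdeal.exists_sup_pow_add_le
    obtain ⟨j, hj, N, hN, hmem⟩ := exists_sub_pow_mem_of_wSubIdeal hind hJm he hb
    set J := Ideal.span (Set.range ((↑) : s → A))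
    have hbK : b - j ∈ K := by
      rw [hK]
      refine MemIgt.of_pow_mem (n := N * ((e + 1) * (c' + 1))) (by positivity) ?_
      rw [pow_mul]
      refine Ideal.pow_right_mono hJ.1.1 _ (hc' _ ?_)
      have h := Ideal.pow_mem_pow hmem ((e + 1) * (c' + 1))
      rw [mul_pow, ← pow_mul, pow_mul (IsLocalRing.maximalIdeal A)] at h
      have hle : IsLocalRing.maximalIdeal A ^ (e + 1) ≤ J ⊔ Ideal.span {b} :=
        (Ideal.pow_le_pow_right e.le_succ).trans (he.trans le_sup_left)
      convert Ideal.mul_mono_left (Ideal.pow_right_mono hle (c' + 1)) h using 1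
      rw [← pow_add]
      congr 1
      ring
    rw [← add_sub_cancel j b]
    exact Submodule.add_mem_sup hj hbK
end
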